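/- Let a_1 < b_1 < a_2 < b_2 < … < a_L < b_L be real numbers, S := ⋃_{l=1}^L [a_l,b_l], R(z) := ∏_{l=1}^L (z−a_l)(z−b_l), and let √R denote the branch analytic on ℂ∖S with √R(z)/z^L → 1 as z → ∞. Then for every real polynomial T of degree at most L−1: (i) for every z ∈ ℂ∖S, (1/π) ∑_{m=1}^L (−1)^{L+m+1} ∫_{a_m}^{b_m} T(t)/((t−z) √|R(t)|) dt = T(z)/√R(z); and (ii) for every x in the interior of S, the Cauchy principal value of ∑_{m=1}^L (−1)^{L+m+1} ∫_{a_m}^{b_m} T(t)/((t−x) √|R(t)|) dt equals 0. -/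

import Mathlib

open MeasureTheory Filter Set Real

/-- principal square root -/
noncomputable def cs (z : ℂ) : ℂ := z ^ (((1 / 2 : ℝ)) : ℂ)

lemma cs_norm (z : ℂ) : ‖cs z‖ = √‖z‖ := by
  rw [cs, Complex.norm_cpow_real, Real.sqrt_eq_rpow]

lemma cs_sq (z : ℂ) : cs z ^ 2 = z := by
  rw [cs, ← Complex.cpow_nat_mul]
  norm_num

lemma cs_of_nonneg {t : ℝ} (ht : 0 ≤ t) : cs t = (√t : ℝ) := by
  rw [cs, ← Complex.ofReal_cpow ht, Real.sqrt_eq_rpow]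

lemma cs_of_nonpos {t : ℝ} (ht : t ≤ 0) : cs t = (√(-t) : ℝ) * Complex.I := by
  have : (-(t : ℂ)) = ((-t : ℝ) : ℂ) := by push_cast; ring
  rw [cs, Complex.ofReal_cpow_of_nonpos ht, this, ← Complex.ofReal_cpow (by linarith),
    ← Real.sqrt_eq_rpow]
  congr 1
  have : (π : ℂ) * Complex.I * ((1 / 2 : ℝ) : ℂ) = π / 2 * Complex.I := by push_cast; ring
  rw [this, Complex.exp_mul_I]
  simp

lemma cs_ne_zero {z : ℂ} (hz : z ≠ 0) : cs z ≠ 0 := by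
  intro h
  have := cs_sq z
  rw [h] at this
  exact hz (by simpa using this.symm)

lemma cs_diff {z : ℂ} (hz : 0 < z.im) : DifferentiableAt ℂ cs z := by
  unfold cs
  exact differentiableAt_id.cpow_const (Or.inr hz.ne')

lemma cs_real_mul {y : ℝ} (hy : 0 < y) {w : ℂ} (hw : w ≠ 0) : cs (y * w) = (√y : ℝ) * cs w := by
  have hy' : (y : ℂ) ≠ 0 := by exact_mod_cast hy.ne'
  rw [← cs_of_nonneg hy.le, cs, cs, cs, Complex.cpow_def_of_ne_zero (mul_ne_zero hy' hw),
    Complex.cpow_def_of_ne_zero hy', Complex.cpow_def_of_ne_zero hw, ← Complex.exp_add,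
    Complex.log_ofReal_mul hy hw, Complex.ofReal_log hy.le]
  ring_nf

lemma cs_bdry {t : ℝ} (ht : t ≠ 0) :
    Tendsto (fun ε : ℝ => cs (t + ε * Complex.I)) (nhdsWithin 0 (Ioi 0)) (nhds (cs t)) := by
  have hpath : Tendsto (fun ε : ℝ => (t + ε * Complex.I : ℂ)) (nhdsWithin 0 (Ioi 0))
      (nhdsWithin (t : ℂ) {z | 0 ≤ z.im}) := by
    refine tendsto_nhdsWithin_iff.2 ⟨?_, ?_⟩
    · have : Continuous (fun ε : ℝ => (t + ε * Complex.I : ℂ)) := by fun_prop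
      have := (this.tendsto 0).mono_left (nhdsWithin_le_nhds (s := Ioi 0))
      simpa using this
    · filter_upwards [self_mem_nhdsWithin] with ε hε
      simpa using (le_of_lt hε : (0:ℝ) ≤ ε)
  rcases lt_or_gt_of_ne ht with h | h
  · have h1 : ContinuousWithinAt cs {z | 0 ≤ z.im} (t : ℂ) := by
      have hl := Complex.continuousWithinAt_log_of_re_neg_of_im_zero (z := (t : ℂ))
        (by simpa using h) (by simp)
      have h2 : ContinuousWithinAt (fun z => Complex.exp (Complex.log z * ((1 / 2 : ℝ) : ℂ)))
        {z | 0 ≤ z.im} (t : ℂ) :=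
        (hl.mul continuousWithinAt_const).cexp
      refine (h2.congr_of_eventuallyEq ?_ ?_)
      · have : ∀ᶠ z : ℂ in nhdsWithin (t : ℂ) {z | 0 ≤ z.im}, z ≠ 0 :=
          nhdsWithin_le_nhds (isOpen_ne.mem_nhds (by simpa using ht))
        filter_upwards [this] with z hz
        rw [cs, Complex.cpow_def_of_ne_zero hz]
      · rw [cs, Complex.cpow_def_of_ne_zero (by exact_mod_cast ht)]
    exact h1.tendsto.comp hpath
  · have h1 : ContinuousAt cs (t : ℂ) := by
      unfold cs
      exact continuousAt_id.cpow continuousAt_const (Or.inl (by simpa using h))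
    exact h1.tendsto.comp (hpath.mono_right nhdsWithin_le_nhds)

lemma halfplane (g : ℂ → ℂ) (g0 : ℝ → ℂ) (G : ℝ → ℝ) (C R0 y0 : ℝ) (hy0 : 0 < y0)
    (hd : DifferentiableOn ℂ g {w | 0 < w.im})
    (decay : ∀ w : ℂ, 0 < w.im → R0 ≤ ‖w‖ → ‖g w‖ ≤ C / ‖w‖ ^ 2)
    (hG : Integrable G)
    (dom : ∀ ε : ℝ, 0 < ε → ε < y0 → ∀ᵐ t : ℝ, ‖g (t + ε * Complex.I)‖ ≤ G t)
    (lim : ∀ᵐ t : ℝ, Tendsto (fun ε : ℝ => g (t + ε * Complex.I)) (nhdsWithin 0 (Ioi 0))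
      (nhds (g0 t))) :
    ∫ t, g0 t = 0 := by
  have hcont : ∀ ε : ℝ, 0 < ε → Continuous (fun t : ℝ => g (t + ε * Complex.I)) := by
    intro ε hε
    have h2 : Continuous (fun t : ℝ => (t + ε * Complex.I : ℂ)) := by fun_prop
    exact hd.continuousOn.comp_continuous h2 (fun t => by simpa using hε)
  have key : ∀ ε : ℝ, 0 < ε → ε < y0 → ∫ t : ℝ, g (t + ε * Complex.I) = 0 := by
    intro ε hε hεy
    have hIg : Integrable (fun t : ℝ => g (t + ε * Complex.I)) :=
      hG.mono' (hcont ε hε).aestronglyMeasurable (dom ε hε hεy)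
    have h1 := intervalIntegral_tendsto_integral (a := fun N : ℝ => -N) (b := fun N : ℝ => N)
      (l := atTop) hIg tendsto_neg_atTop_atBot tendsto_id
    refine tendsto_nhds_unique h1 ?_
    have hC : Tendsto (fun N : ℝ => 4 * |C| / N) atTop (nhds 0) :=
      tendsto_const_nhds.div_atTop tendsto_id
    refine squeeze_zero_norm' ?_ hC
    filter_upwards [eventually_gt_atTop (max R0 ε), eventually_gt_atTop 0] with N hN hN0
    have hNR : R0 < N := lt_of_le_of_lt (le_max_left _ _) hN
    have hNε : ε < N := lt_of_le_of_lt (le_max_right _ _) hN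
    have hr := Complex.integral_boundary_rect_eq_zero_of_differentiableOn g
      (⟨-N, ε⟩ : ℂ) (⟨N, N⟩ : ℂ) (hd.mono (by
        intro w hw
        rw [Complex.mem_reProdIm] at hw
        have := hw.2
        simp only [uIcc_of_le hNε.le] at this
        exact lt_of_lt_of_le hε this.1))
    simp only at hr
    have hb : ∀ w : ℂ, 0 < w.im → N ≤ ‖w‖ → ‖g w‖ ≤ |C| / N ^ 2 := by
      intro w hw hw2
      refine (decay w hw (hNR.le.trans hw2)).trans ?_
      gcongr
      exact le_abs_self C
    have b1 : ‖∫ x : ℝ in (-N)..N, g (x + N * Complex.I)‖ ≤ |C| / N ^ 2 * |N - (-N)| := by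
      refine intervalIntegral.norm_integral_le_of_norm_le_const (fun x _ => hb _ (by simpa) ?_)
      refine le_trans ?_ (Complex.abs_im_le_norm _)
      simp [le_abs_self]
    have b2 : ‖∫ y : ℝ in ε..N, g ((N : ℝ) + y * Complex.I)‖ ≤ |C| / N ^ 2 * |N - ε| := by
      refine intervalIntegral.norm_integral_le_of_norm_le_const (fun x hx => hb _ ?_ ?_)
      · rw [uIoc_of_le hNε.le] at hx
        simpa using hε.trans hx.1
      refine le_trans ?_ (Complex.abs_re_le_norm _)
      simp [le_abs_self]
    have b3 : ‖∫ y : ℝ in ε..N, g ((-N : ℝ) + y * Complex.I)‖ ≤ |C| / N ^ 2 * |N - ε| := by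
      refine intervalIntegral.norm_integral_le_of_norm_le_const (fun x hx => hb _ ?_ ?_)
      · rw [uIoc_of_le hNε.le] at hx
        simpa using hε.trans hx.1
      refine le_trans ?_ (Complex.abs_re_le_norm _)
      simp [le_abs_self]
    have e : ∫ x : ℝ in (-N)..N, g (x + ε * Complex.I) =
      (∫ x : ℝ in (-N)..N, g (x + N * Complex.I))
      - Complex.I • (∫ y : ℝ in ε..N, g ((N : ℝ) + y * Complex.I))
      + Complex.I • (∫ y : ℝ in ε..N, g ((-N : ℝ) + y * Complex.I)) := by
      linear_combination hr
    rw [e]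
    have hA : (0:ℝ) ≤ |C| / N ^ 2 := by positivity
    rw [abs_of_pos (show (0:ℝ) < N - -N by linarith)] at b1
    rw [abs_of_pos (show (0:ℝ) < N - ε by linarith)] at b2 b3
    calc _ ≤ |C| / N ^ 2 * (N - -N) + |C| / N ^ 2 * (N - ε) + |C| / N ^ 2 * (N - ε) := by
          refine (norm_add_le _ _).trans (add_le_add ((norm_sub_le _ _).trans
            (add_le_add b1 ?_)) ?_)
          · rw [norm_smul]; simpa using b2
          · rw [norm_smul]; simpa using b3
      _ ≤ |C| / N ^ 2 * (4 * N) := by nlinarith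
      _ = 4 * |C| / N := by field_simp
  have hlim := tendsto_integral_filter_of_dominated_convergence (l := nhdsWithin (0:ℝ) (Ioi 0))
    (F := fun ε (t : ℝ) => g (t + ε * Complex.I)) (f := g0) G
    (by filter_upwards [self_mem_nhdsWithin] with ε hε
        exact (hcont ε hε).aestronglyMeasurable)
    (by filter_upwards [Ioo_mem_nhdsGT hy0] with ε hε
        exact dom ε hε.1 hε.2) hG lim
  refine tendsto_nhds_unique hlim ?_
  refine tendsto_const_nhds.congr' ?_
  filter_upwards [Ioo_mem_nhdsGT hy0] with ε hε
  exact (key ε hε.1 hε.2).symm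

lemma near_lemma (E : Finset ℝ) (hE : E.Nonempty) :
    ∃ c > 0, ∀ t : ℝ, ∃ j ∈ E, ∀ k ∈ E, k ≠ j → c * (1 + |t|) ≤ |t - k| := by
  obtain ⟨M, hM⟩ : ∃ M : ℝ, ∀ e ∈ E, |e| ≤ M := by
    obtain ⟨M, hM⟩ := (E.image (fun e => |e|)).bddAbove
    exact ⟨M, fun e he => hM (by simpa using ⟨e, he, rfl⟩)⟩
  obtain ⟨δ, hδ, hδE⟩ : ∃ δ > 0, ∀ j ∈ E, ∀ k ∈ E, k ≠ j → δ ≤ |k - j| := by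
    by_cases h : E.offDiag.Nonempty
    · obtain ⟨p, hp, hmin⟩ := E.offDiag.exists_min_image (fun p => |p.1 - p.2|) h
      refine ⟨|p.1 - p.2|, ?_, ?_⟩
      · rw [Finset.mem_offDiag] at hp
        exact abs_pos.2 (sub_ne_zero.2 hp.2.2)
      · intro j hj k hk hkj
        exact hmin (k, j) (Finset.mem_offDiag.2 ⟨hk, hj, hkj⟩)
    · refine ⟨1, one_pos, fun j hj k hk hkj => ?_⟩
      exact absurd ⟨(k, j), Finset.mem_offDiag.2 ⟨hk, hj, hkj⟩⟩ h
  have hM0 : 0 ≤ M := by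
    obtain ⟨e, he⟩ := hE
    exact (abs_nonneg e).trans (hM e he)
  -- 1 + |t| ≤ 1 + M + |t-k| ≤ (2(1+M)/δ + 1)|t-k|
  refine ⟨(2 * (1 + M) / δ + 1)⁻¹, by positivity, fun t => ?_⟩
  obtain ⟨j, hj, hmin⟩ := E.exists_min_image (fun e => |t - e|) hE
  refine ⟨j, hj, fun k hk hkj => ?_⟩
  have h1 := hδE j hj k hk hkj
  have h2 := hmin k hk
  have h3 : δ / 2 ≤ |t - k| := by
    have : |k - j| ≤ |t - k| + |t - j| := by
      have := abs_sub_le k t j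
      rwa [abs_sub_comm k t] at this
    linarith
  have h4 : |t| ≤ M + |t - k| := by
    have := abs_sub_abs_le_abs_sub t k
    linarith [hM k hk]
  rw [inv_mul_le_iff₀ (by positivity)]
  have h5 : 1 + M ≤ 2 * (1 + M) / δ * |t - k| := by
    calc 1 + M = 2 * (1 + M) / δ * (δ / 2) := by field_simp
      _ ≤ _ := by gcongr
  linarith

lemma integrable_sing (e : ℝ) :
    Integrable (fun t : ℝ => (1 + |t|) ^ (-(3 / 2) : ℝ) * (√|t - e|)⁻¹) := by
  have hA : Integrable (fun t : ℝ => (1 + |t|) ^ (-(3 / 2) : ℝ)) := by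
    have := integrable_one_add_norm (E := ℝ) (μ := volume) (r := 3 / 2) (by simp; norm_num)
    simpa using this
  have hB0 : IntegrableOn (fun s : ℝ => (√|s|)⁻¹) (Icc (-1) 1) := by
    have h1 : IntegrableOn (fun s : ℝ => (√|s|)⁻¹) (Ioc 0 1) := by
      have := (intervalIntegral.intervalIntegrable_rpow' (a := 0) (b := 1) (r := -(1/2))
        (by norm_num)).1
      refine this.congr_fun ?_ measurableSet_Ioc
      intro s hs
      simp only
      rw [abs_of_pos hs.1, Real.sqrt_eq_rpow, Real.rpow_neg hs.1.le]
    have h2 : IntegrableOn (fun s : ℝ => (√|s|)⁻¹) (Ico (-1) 0) := by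
      have := h1.comp_neg
      simpa using this
    have : Icc (-1 : ℝ) 1 ⊆ (Ico (-1) 0 ∪ Ioc 0 1) ∪ {0} := by
      intro s hs
      rcases lt_trichotomy s 0 with h | h | h
      · exact Or.inl (Or.inl ⟨hs.1, h⟩)
      · exact Or.inr h
      · exact Or.inl (Or.inr ⟨h, hs.2⟩)
    exact ((h2.union h1).union (by simp)).mono_set this
  have hB1 : Integrable (indicator (Icc (-1) 1) (fun s : ℝ => (√|s|)⁻¹)) :=
    hB0.integrable_indicator measurableSet_Icc
  have hB := hB1.comp_sub_right e
  refine (hA.add hB).mono' ?_ ?_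
  · refine Measurable.aestronglyMeasurable ?_
    fun_prop
  · refine Eventually.of_forall fun t => ?_
    have h1 : 0 ≤ (1 + |t|) ^ (-(3 / 2) : ℝ) := by positivity
    have h1' : (1 + |t|) ^ (-(3 / 2) : ℝ) ≤ 1 :=
      Real.rpow_le_one_of_one_le_of_nonpos (by linarith [abs_nonneg t]) (by norm_num)
    have h2 : 0 ≤ (√|t - e|)⁻¹ := by positivity
    rw [Real.norm_of_nonneg (by positivity)]
    simp only [Pi.add_apply]
    by_cases h : t - e ∈ Icc (-1 : ℝ) 1
    · rw [indicator_of_mem h]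
      nlinarith
    · rw [indicator_of_notMem h]
      have : 1 ≤ |t - e| := by
        by_contra hc
        exact h ⟨(abs_le.1 (not_le.1 hc).le).1, (abs_le.1 (not_le.1 hc).le).2⟩
      have : 1 ≤ √|t - e| := Real.one_le_sqrt.2 this
      have := inv_le_one_of_one_le₀ this
      nlinarith

/-- the majorant -/
noncomputable def Hm (E : Finset ℝ) (L : ℕ) (t : ℝ) : ℝ :=
  (1 + |t|) ^ (L - 1) / (∏ e ∈ E, √|t - e|) / (1 + |t|)

lemma Hm_integrable (E : Finset ℝ) (L : ℕ) (hL : 1 ≤ L) (hE : E.card = 2 * L) :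
    Integrable (Hm E L) := by
  have hne : E.Nonempty := Finset.card_pos.1 (by omega)
  obtain ⟨c, hc, hcE⟩ := near_lemma E hne
  have hI : Integrable (fun t : ℝ => ((√c) ^ (2 * L - 1))⁻¹ *
      ∑ e ∈ E, (1 + |t|) ^ (-(3 / 2) : ℝ) * (√|t - e|)⁻¹) :=
    (integrable_finsetSum _ fun e _ => integrable_sing e).const_mul _
  refine hI.mono' ?_ ?_
  · refine Measurable.aestronglyMeasurable ?_
    unfold Hm
    fun_prop
  · refine Eventually.of_forall fun t => ?_
    obtain ⟨j, hj, hk⟩ := hcE t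
    have hu : 0 < 1 + |t| := by positivity
    have hs : 0 < √(1 + |t|) := Real.sqrt_pos.2 hu
    have hsc : 0 < √c := Real.sqrt_pos.2 hc
    have h0 : 0 ≤ Hm E L t := by
      unfold Hm
      have : 0 ≤ ∏ e ∈ E, √|t - e| := Finset.prod_nonneg fun _ _ => Real.sqrt_nonneg _
      positivity
    rw [Real.norm_of_nonneg h0]
    have hprod : (√c * √(1 + |t|)) ^ (2 * L - 1) ≤ ∏ e ∈ E.erase j, √|t - e| := by
      have hcard : (E.erase j).card = 2 * L - 1 := by rw [Finset.card_erase_of_mem hj, hE]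
      rw [← hcard, ← Finset.prod_const]
      refine Finset.prod_le_prod (fun _ _ => by positivity) fun e he => ?_
      rw [← Real.sqrt_mul hc.le]
      exact Real.sqrt_le_sqrt (hk e (Finset.mem_of_mem_erase he) (Finset.ne_of_mem_erase he))
    have hr : (1 + |t|) ^ (-(3 / 2) : ℝ) = ((√(1 + |t|)) ^ 3)⁻¹ := by
      rw [Real.rpow_neg hu.le, Real.sqrt_eq_rpow, ← Real.rpow_natCast, ← Real.rpow_mul hu.le]
      norm_num
    calc Hm E L t = (1 + |t|) ^ (L - 1) / (1 + |t|) * (∏ e ∈ E.erase j, √|t - e|)⁻¹ *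
            (√|t - j|)⁻¹ := by
          rw [Hm, ← Finset.mul_prod_erase E _ hj, div_eq_mul_inv _ (_ * _), mul_inv]
          ring
      _ ≤ (1 + |t|) ^ (L - 1) / (1 + |t|) * ((√c * √(1 + |t|)) ^ (2 * L - 1))⁻¹ *
            (√|t - j|)⁻¹ := by
          gcongr
      _ = ((√c) ^ (2 * L - 1))⁻¹ * ((1 + |t|) ^ (-(3 / 2) : ℝ) * (√|t - j|)⁻¹) := by
          rw [hr, mul_pow, mul_inv]
          obtain ⟨k, rfl⟩ : ∃ k, L = k + 1 := ⟨L - 1, by omega⟩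
          have e1 : 2 * (k + 1) - 1 = 2 * k + 1 := by omega
          have hsq : 1 + |t| = √(1 + |t|) ^ 2 := (Real.sq_sqrt hu.le).symm
          have : (1 + |t|) ^ (k + 1 - 1) / (1 + |t|) * (√(1 + |t|) ^ (2 * (k + 1) - 1))⁻¹
            = (√(1 + |t|) ^ 3)⁻¹ := by
            rw [e1, Nat.add_sub_cancel]
            nth_rewrite 1 [hsq]
            nth_rewrite 2 [hsq]
            field_simp
            ring
          linear_combination ((√c) ^ (2 * (k+1) - 1))⁻¹ * (√|t - j|)⁻¹ * this
      _ ≤ _ := by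
          gcongr
          exact Finset.single_le_sum (f := fun e => (1 + |t|) ^ (-(3 / 2) : ℝ) * (√|t - e|)⁻¹)
            (fun _ _ => by positivity) hj

noncomputable def Pf (E : Finset ℝ) (z : ℂ) : ℂ := ∏ e ∈ E, cs (z - e)

noncomputable def ff (E : Finset ℝ) (T : Polynomial ℝ) (z : ℂ) : ℂ := Polynomial.aeval z T / Pf E z

lemma Pf_norm (E : Finset ℝ) (z : ℂ) : ‖Pf E z‖ = ∏ e ∈ E, √‖z - e‖ := by
  rw [Pf, norm_prod]
  exact Finset.prod_congr rfl fun e _ => cs_norm _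

lemma poly_bound (T : Polynomial ℝ) (L : ℕ) (hL : 1 ≤ L) (hT : T.natDegree ≤ L - 1) :
    ∃ C, 0 ≤ C ∧ ∀ w : ℂ, ‖Polynomial.aeval w T‖ ≤ C * (1 + ‖w‖) ^ (L - 1) := by
  refine ⟨∑ i ∈ Finset.range L, |T.coeff i|, by positivity, fun w => ?_⟩
  rw [Polynomial.aeval_eq_sum_range' (show T.natDegree < L by omega), Finset.sum_mul]
  refine (norm_sum_le _ _).trans (Finset.sum_le_sum fun i hi => ?_)
  rw [norm_smul, norm_pow, Real.norm_eq_abs]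
  have : i ≤ L - 1 := by have := Finset.mem_range.1 hi; omega
  gcongr
  calc ‖w‖ ^ i ≤ (1 + ‖w‖) ^ i := by gcongr; linarith
    _ ≤ _ := pow_le_pow_right₀ (by linarith [norm_nonneg w]) this

lemma ff_decay (E : Finset ℝ) (T : Polynomial ℝ) (L : ℕ) (hL : 1 ≤ L) (hE : E.card = 2 * L)
    (hT : T.natDegree ≤ L - 1) :
    ∃ C R0, 0 ≤ C ∧ 1 ≤ R0 ∧ ∀ w : ℂ, R0 ≤ ‖w‖ → ‖ff E T w‖ ≤ C / ‖w‖ := by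
  obtain ⟨C, hC, hCb⟩ := poly_bound T L hL hT
  obtain ⟨M, hM⟩ : ∃ M : ℝ, ∀ e ∈ E, |e| ≤ M := by
    obtain ⟨M, hM⟩ := (E.image (fun e => |e|)).bddAbove
    exact ⟨M, fun e he => hM (by simpa using ⟨e, he, rfl⟩)⟩
  refine ⟨C * 2 ^ (L - 1) * 2 ^ L, 2 * |M| + 1, by positivity, by linarith [abs_nonneg M],
    fun w hw => ?_⟩
  have hw1 : 1 ≤ ‖w‖ := by linarith [abs_nonneg M]
  have hw0 : 0 < ‖w‖ := by linarith
  have hP : (‖w‖ / 2) ^ L ≤ ‖Pf E w‖ := by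
    rw [Pf_norm]
    calc (‖w‖ / 2) ^ L = ∏ e ∈ E, √(‖w‖ / 2) := by
          rw [Finset.prod_const, hE, pow_mul, Real.sq_sqrt (by positivity)]
      _ ≤ _ := by
          refine Finset.prod_le_prod (fun _ _ => by positivity) fun e he => Real.sqrt_le_sqrt ?_
          have h1 := norm_sub_norm_le w (e : ℂ)
          rw [Complex.norm_real, Real.norm_eq_abs] at h1
          have h2 := hM e he
          have h3 := le_abs_self M
          linarith
  rw [ff, norm_div]
  calc _ ≤ (C * (2 * ‖w‖) ^ (L - 1)) / (‖w‖ / 2) ^ L := by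
        gcongr
        refine (hCb w).trans ?_
        gcongr
        linarith
    _ = _ := by
        obtain ⟨k, rfl⟩ : ∃ k, L = k + 1 := ⟨L - 1, by omega⟩
        simp only [Nat.add_sub_cancel, mul_pow, div_pow, pow_succ]
        field_simp

lemma ff_strip (E : Finset ℝ) (T : Polynomial ℝ) (L : ℕ) (hL : 1 ≤ L)
    (hT : T.natDegree ≤ L - 1) :
    ∃ C, 0 ≤ C ∧ ∀ t ε : ℝ, 0 ≤ ε → ε ≤ 1 → t ∉ E →
      ‖ff E T (t + ε * Complex.I)‖ ≤ C * (Hm E L t * (1 + |t|)) := by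
  obtain ⟨C, hC, hCb⟩ := poly_bound T L hL hT
  refine ⟨C * 2 ^ (L - 1), by positivity, fun t ε h0 h1 ht => ?_⟩
  have hpos : 0 < ∏ e ∈ E, √|t - e| := by
    refine Finset.prod_pos fun e he => Real.sqrt_pos.2 (abs_pos.2 (sub_ne_zero.2 ?_))
    rintro rfl; exact ht he
  have hP : ∏ e ∈ E, √|t - e| ≤ ‖Pf E (t + ε * Complex.I)‖ := by
    rw [Pf_norm]
    refine Finset.prod_le_prod (fun _ _ => by positivity) fun e he => Real.sqrt_le_sqrt ?_
    refine le_trans (le_of_eq ?_) (Complex.abs_re_le_norm _)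
    simp
  have hw : 1 + ‖(t + ε * Complex.I : ℂ)‖ ≤ 2 * (1 + |t|) := by
    have : ‖(t + ε * Complex.I : ℂ)‖ ≤ |t| + ε := by
      refine (norm_add_le _ _).trans ?_
      simp [abs_of_nonneg h0]
    linarith [abs_nonneg t]
  have hu : 0 < 1 + |t| := by positivity
  rw [ff, norm_div, Hm]
  calc _ ≤ (C * (2 * (1 + |t|)) ^ (L - 1)) / ∏ e ∈ E, √|t - e| := by
        gcongr
        refine (hCb _).trans ?_
        gcongr
    _ = _ := by
        rw [mul_pow]
        field_simp

lemma Pf_ne_zero (E : Finset ℝ) {z : ℂ} (hz : ∀ e ∈ E, z ≠ (e : ℂ)) : Pf E z ≠ 0 :=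
  Finset.prod_ne_zero_iff.2 fun e he => cs_ne_zero (sub_ne_zero.2 (hz e he))

lemma Pf_ne_zero' (E : Finset ℝ) {z : ℂ} (hz : 0 < z.im) : Pf E z ≠ 0 :=
  Pf_ne_zero E fun e _ h => by rw [h] at hz; simp at hz

lemma Pf_diff (E : Finset ℝ) {z : ℂ} (hz : 0 < z.im) : DifferentiableAt ℂ (Pf E) z := by
  unfold Pf
  refine DifferentiableAt.fun_finsetProd fun e _ => ?_
  have h1 : DifferentiableAt ℂ cs (z - e) := cs_diff (by simpa using hz)
  exact h1.comp z (differentiableAt_id.sub_const _)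

lemma ff_diff (E : Finset ℝ) (T : Polynomial ℝ) {z : ℂ} (hz : 0 < z.im) :
    DifferentiableAt ℂ (ff E T) z := by
  unfold ff
  exact (T.differentiable_aeval z).div (Pf_diff E hz) (Pf_ne_zero' E hz)

lemma Pf_bdry (E : Finset ℝ) {t : ℝ} (ht : t ∉ E) :
    Tendsto (fun ε : ℝ => Pf E (t + ε * Complex.I)) (nhdsWithin 0 (Ioi 0)) (nhds (Pf E t)) := by
  unfold Pf
  refine tendsto_finsetProd _ fun e he => ?_
  have := cs_bdry (t := t - e) (sub_ne_zero.2 (by rintro rfl; exact ht he))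
  push_cast at this
  refine this.congr fun ε => ?_
  congr 1; ring

lemma ff_bdry (E : Finset ℝ) (T : Polynomial ℝ) {t : ℝ} (ht : t ∉ E) :
    Tendsto (fun ε : ℝ => ff E T (t + ε * Complex.I)) (nhdsWithin 0 (Ioi 0))
      (nhds (ff E T t)) := by
  unfold ff
  refine Tendsto.div ?_ (Pf_bdry E ht) (Pf_ne_zero E ?_)
  · have h1 : Continuous (fun ε : ℝ => Polynomial.aeval (t + ε * Complex.I : ℂ) T) :=
      T.continuous_aeval.comp (by fun_prop)
    have := (h1.tendsto 0).mono_left (nhdsWithin_le_nhds (s := Ioi 0))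
    simpa using this
  · intro e he h
    have : t = e := by exact_mod_cast h
    exact ht (this ▸ he)

lemma z_lower (z : ℂ) (hz : z.im ≠ 0) :
    ∃ K, 0 < K ∧ ∀ t ε : ℝ, |ε| ≤ |z.im| / 2 → 1 + |t| ≤ K * ‖(t + ε * Complex.I - z : ℂ)‖ := by
  have hy : 0 < |z.im| := abs_pos.2 hz
  refine ⟨(1 + |z.re|) * (2 / |z.im|) + 1, by positivity, fun t ε hε => ?_⟩
  have h1 : |t - z.re| ≤ ‖(t + ε * Complex.I - z : ℂ)‖ := by
    refine le_trans (le_of_eq ?_) (Complex.abs_re_le_norm _)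
    simp
  have h2 : |z.im| / 2 ≤ ‖(t + ε * Complex.I - z : ℂ)‖ := by
    have h3 : |ε - z.im| ≤ ‖(t + ε * Complex.I - z : ℂ)‖ := by
      refine le_trans (le_of_eq ?_) (Complex.abs_im_le_norm _)
      simp
    have h4 := abs_sub_abs_le_abs_sub z.im ε
    rw [abs_sub_comm] at h4
    linarith
  set n := ‖(t + ε * Complex.I - z : ℂ)‖
  have h3 : |t| ≤ |z.re| + |t - z.re| := by
    have := abs_sub_abs_le_abs_sub t z.re
    linarith
  have h5 : 1 + |z.re| ≤ (1 + |z.re|) * (2 / |z.im|) * n := by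
    calc 1 + |z.re| = (1 + |z.re|) * (2 / |z.im|) * (|z.im| / 2) := by field_simp
      _ ≤ _ := by gcongr
  linarith

lemma ae_notMem (E : Finset ℝ) : ∀ᵐ t : ℝ, t ∉ E := by
  have : volume (E : Set ℝ) = 0 := E.finite_toSet.measure_zero _
  exact measure_eq_zero_iff_ae_notMem.1 this

lemma Hm_nonneg (E : Finset ℝ) (L : ℕ) (t : ℝ) : 0 ≤ Hm E L t := by
  unfold Hm
  have : 0 ≤ ∏ e ∈ E, √|t - e| := Finset.prod_nonneg fun _ _ => Real.sqrt_nonneg _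
  positivity

lemma ff_meas (E : Finset ℝ) (T : Polynomial ℝ) : Measurable (fun t : ℝ => ff E T t) := by
  have h1 : Measurable (fun z : ℂ => Polynomial.aeval z T) := T.continuous_aeval.measurable
  have h2 : Measurable (ff E T) := by
    unfold ff Pf cs
    refine h1.div ?_
    fun_prop
  exact h2.comp Complex.measurable_ofReal

/-- quotient bound on the strip -/
lemma ff_quot_bound (E : Finset ℝ) (T : Polynomial ℝ) (L : ℕ) (hL : 1 ≤ L)
    (hT : T.natDegree ≤ L - 1) (z : ℂ) (hz : z.im ≠ 0) :
    ∃ C, 0 ≤ C ∧ ∀ t ε : ℝ, 0 ≤ ε → ε ≤ 1 → ε ≤ |z.im| / 2 → t ∉ E →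
      ‖ff E T (t + ε * Complex.I) / (t + ε * Complex.I - z)‖ ≤ C * Hm E L t := by
  obtain ⟨C, hC, hCb⟩ := ff_strip E T L hL hT
  obtain ⟨K, hK, hKb⟩ := z_lower z hz
  refine ⟨C * K, by positivity, fun t ε h0 h1 h2 ht => ?_⟩
  have h3 := hCb t ε h0 h1 ht
  have h4 := hKb t ε (by rwa [abs_of_nonneg h0])
  have hu : 0 < 1 + |t| := by positivity
  have hn : 0 < ‖(t + ε * Complex.I - z : ℂ)‖ := by
    by_contra hc
    have : ‖(t + ε * Complex.I - z : ℂ)‖ = 0 := le_antisymm (not_lt.1 hc) (norm_nonneg _)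
    rw [this] at h4
    linarith
  rw [norm_div, div_le_iff₀ hn]
  have hH := Hm_nonneg E L t
  calc _ ≤ _ := h3
    _ ≤ C * (Hm E L t * (K * ‖(t + ε * Complex.I - z : ℂ)‖)) := by gcongr
    _ = _ := by ring

lemma ff_quot_int (E : Finset ℝ) (T : Polynomial ℝ) (L : ℕ) (hL : 1 ≤ L) (hE : E.card = 2 * L)
    (hT : T.natDegree ≤ L - 1) (z : ℂ) (hz : z.im ≠ 0) :
    Integrable (fun t : ℝ => ff E T t / (t - z)) := by
  obtain ⟨C, hC, hCb⟩ := ff_quot_bound E T L hL hT z hz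
  refine ((Hm_integrable E L hL hE).const_mul C).mono' ?_ ?_
  · exact ((ff_meas E T).div (by fun_prop)).aestronglyMeasurable
  · filter_upwards [ae_notMem E] with t ht
    have := hCb t 0 le_rfl zero_le_one (by positivity) ht
    simpa using this

lemma inv_decay (z : ℂ) (w : ℂ) (h : 2 * ‖z‖ ≤ ‖w‖) (hw : 0 < ‖w‖) : ‖(w - z)⁻¹‖ ≤ 2 / ‖w‖ := by
  have h1 := norm_sub_norm_le w z
  rw [norm_inv, inv_le_comm₀ (by linarith) (by positivity), inv_div]
  linarith

lemma lower_zero (E : Finset ℝ) (T : Polynomial ℝ) (L : ℕ) (hL : 1 ≤ L) (hE : E.card = 2 * L)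
    (hT : T.natDegree ≤ L - 1) (z : ℂ) (hz : z.im < 0) :
    ∫ t : ℝ, ff E T t / (t - z) = 0 := by
  obtain ⟨C, hC, hCb⟩ := ff_quot_bound E T L hL hT z hz.ne
  obtain ⟨D, R0, hD, hR0, hdec⟩ := ff_decay E T L hL hE hT
  have hy : 0 < |z.im| := abs_pos.2 hz.ne
  refine halfplane (fun w => ff E T w / (w - z)) _ (fun t => C * Hm E L t) (D * 2)
    (max R0 (2 * ‖z‖)) (min 1 (|z.im| / 2)) (by positivity) ?_ ?_
    ((Hm_integrable E L hL hE).const_mul C) ?_ ?_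
  · intro w hw
    have hw : 0 < w.im := hw
    have : w - z ≠ 0 := fun h => by
      rw [sub_eq_zero.1 h] at hw; linarith
    exact ((ff_diff E T hw).div (differentiableAt_id.sub_const z) this).differentiableWithinAt
  · intro w _ hw
    have h1 := le_trans (le_max_left _ _) hw
    have h2 := le_trans (le_max_right _ _) hw
    have h0 : 0 < ‖w‖ := by linarith
    rw [div_eq_mul_inv, norm_mul]
    calc _ ≤ D / ‖w‖ * (2 / ‖w‖) := by
          gcongr
          · exact hdec w h1
          · exact inv_decay z w h2 h0
      _ = _ := by field_simp
  · intro ε h0 h1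
    filter_upwards [ae_notMem E] with t ht
    exact hCb t ε h0.le (h1.le.trans (min_le_left _ _)) (h1.le.trans (min_le_right _ _)) ht
  · filter_upwards [ae_notMem E] with t ht
    refine (ff_bdry E T ht).div ?_ ?_
    · have h1 : Continuous (fun ε : ℝ => (t + ε * Complex.I - z : ℂ)) := by fun_prop
      have := (h1.tendsto 0).mono_left (nhdsWithin_le_nhds (s := Ioi 0))
      simpa using this
    · intro h
      rw [← sub_eq_zero.1 h] at hz
      simp at hz

lemma poisson_int (z : ℂ) (hz : 0 < z.im) :
    (∫ t : ℝ, (z - star z) / (((t : ℂ) - star z) * (t - z))) = 2 * π * Complex.I := by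
  have h1 : ∀ t : ℝ, (z - star z) / (((t : ℂ) - star z) * (t - z)) =
      (2 * Complex.I) * ((((1 + ((t - z.re) / z.im) ^ 2)⁻¹ * (z.im)⁻¹ : ℝ)) : ℂ) := by
    intro t
    have e1 : z - star z = 2 * z.im * Complex.I := by
      apply Complex.ext <;> simp
      ring
    have e2 : ((t : ℂ) - star z) * (t - z) = (((t - z.re) ^ 2 + z.im ^ 2 : ℝ) : ℂ) := by
      apply Complex.ext
      · rw [Complex.ofReal_re]; simp; ring
      · rw [Complex.ofReal_im]; simp; ring
    rw [e1, e2]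
    have h3 : (((t - z.re) ^ 2 + z.im ^ 2 : ℝ) : ℂ) ≠ 0 := by
      exact_mod_cast (by positivity : (t - z.re) ^ 2 + z.im ^ 2 ≠ 0)
    have h4 : ((1 + ((t - z.re) / z.im) ^ 2)⁻¹ * (z.im)⁻¹ : ℝ) =
      z.im / ((t - z.re) ^ 2 + z.im ^ 2) := by
      have : (1 + ((t - z.re) / z.im) ^ 2) = ((t - z.re) ^ 2 + z.im ^ 2) / z.im ^ 2 := by
        field_simp; ring
      rw [this]
      field_simp
    rw [h4]
    push_cast
    ring
  simp_rw [h1]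
  rw [integral_const_mul, integral_complex_ofReal, integral_mul_const]
  have h2 : ∫ t : ℝ, (1 + ((t - z.re) / z.im) ^ 2)⁻¹ = z.im * π := by
    have := integral_sub_right_eq_self (μ := volume) (fun t : ℝ => (1 + (t / z.im) ^ 2)⁻¹) z.re
    rw [this, Measure.integral_comp_div (fun t : ℝ => (1 + t ^ 2)⁻¹), integral_univ_inv_one_add_sq,
      abs_of_pos hz, smul_eq_mul]
  rw [h2]
  have : z.im * π * z.im⁻¹ = π := by field_simp
  rw [this]
  ring

lemma poisson_integrable (z : ℂ) (hz : 0 < z.im) :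
    Integrable (fun t : ℝ => (z - star z) / (((t : ℂ) - star z) * (t - z))) := by
  by_contra h
  have h1 := poisson_int z hz
  rw [integral_undef h] at h1
  have : (π : ℂ) ≠ 0 := by exact_mod_cast Real.pi_ne_zero
  simp [this] at h1


lemma upper_val (E : Finset ℝ) (T : Polynomial ℝ) (L : ℕ) (hL : 1 ≤ L) (hE : E.card = 2 * L)
    (hT : T.natDegree ≤ L - 1) (z : ℂ) (hz : 0 < z.im) :
    ∫ t : ℝ, ff E T t / (t - z) = 2 * π * Complex.I * ff E T z := by
  have hz' : (star z).im ≠ 0 := by simpa using hz.ne'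
  have hzz : z - star z ≠ 0 := by
    intro h
    have := congrArg Complex.im h
    simp at this
    linarith
  obtain ⟨C, hC, hCb⟩ := ff_quot_bound E T L hL hT z hz.ne'
  obtain ⟨K, hK, hKb⟩ := z_lower z hz.ne'
  obtain ⟨K', hK', hKb'⟩ := z_lower (star z) hz'
  obtain ⟨D, R0, hD, hR0, hdec⟩ := ff_decay E T L hL hE hT
  obtain ⟨A, hA⟩ : ∃ A : ℂ, A = ff E T z * (z - star z) := ⟨_, rfl⟩
  set h : ℂ → ℂ := fun w => ff E T w - A / (w - star z) with hh
  have hhz : h z = 0 := by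
    simp only [hh, hA]
    rw [mul_div_assoc, div_self hzz]; ring
  have hg : ∀ w, w ≠ z → dslope h z w = ff E T w / (w - z) - A * ((w - star z)⁻¹ * (w - z)⁻¹) := by
    intro w hw
    rw [dslope_of_ne _ hw, slope_def_field, hhz]
    simp only [hh]
    rw [sub_zero, sub_div, div_div, div_eq_mul_inv A, mul_inv]
  have hy : 0 < |z.im| := abs_pos.2 hz.ne'
  have hopen : IsOpen {w : ℂ | 0 < w.im} := isOpen_lt continuous_const Complex.continuous_im
  have hIg2 : Integrable (fun t : ℝ => (1 + |t|) ^ (-2 : ℝ)) := by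
    have := integrable_one_add_norm (E := ℝ) (μ := volume) (r := 2) (by simp)
    simpa using this
  have main := halfplane (dslope h z)
    (fun t => ff E T t / (t - z) - ff E T z * ((z - star z) / (((t : ℂ) - star z) * (t - z))))
    (fun t => C * Hm E L t + ‖A‖ * (K' * K) * (1 + |t|) ^ (-2 : ℝ)) (D * 2 + ‖A‖ * 4)
    (max R0 (2 * ‖z‖ + 1)) (min 1 (|z.im| / 2)) (by positivity) ?_ ?_
    (((Hm_integrable E L hL hE).const_mul C).add (hIg2.const_mul _)) ?_ ?_
  · rw [integral_sub (ff_quot_int E T L hL hE hT z hz.ne')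
      ((poisson_integrable z hz).const_mul _), integral_const_mul, poisson_int z hz] at main
    linear_combination main
  · refine (Complex.differentiableOn_dslope (hopen.mem_nhds hz)).2 ?_
    intro w hw
    have hw : 0 < w.im := hw
    have : w - star z ≠ 0 := fun h => by
      rw [sub_eq_zero.1 h] at hw; simp at hw; linarith
    exact ((ff_diff E T hw).sub ((differentiableAt_const A).div
      (differentiableAt_id.sub_const _) this)).differentiableWithinAt
  · intro w _ hw
    have h1 := le_trans (le_max_left _ _) hw
    have h2 := le_trans (le_max_right _ _) hw
    have h0 : 0 < ‖w‖ := by linarith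
    have hne : w ≠ z := by
      rintro rfl; linarith
    rw [hg w hne]
    refine (norm_sub_le _ _).trans ?_
    have i1 := inv_decay z w (by linarith) h0
    have i2 := inv_decay (star z) w (by rw [norm_star]; linarith) h0
    rw [div_eq_mul_inv, norm_mul, norm_mul, norm_mul]
    calc _ ≤ D / ‖w‖ * (2 / ‖w‖) + ‖A‖ * ((2 / ‖w‖) * (2 / ‖w‖)) := by
          gcongr
          exact hdec w h1
      _ = _ := by field_simp; ring
  · intro ε h0 h1
    have hε1 := (h1.le.trans (min_le_left _ _))
    have hε2 := (h1.le.trans (min_le_right _ _))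
    filter_upwards [ae_notMem E] with t ht
    have hne : (t + ε * Complex.I : ℂ) ≠ z := by
      intro h
      have := congrArg Complex.im h
      simp at this
      rw [abs_of_pos hz] at hε2
      linarith
    rw [hg _ hne]
    refine (norm_sub_le _ _).trans (add_le_add (hCb t ε h0.le hε1 hε2 ht) ?_)
    have k1 := hKb t ε (by rwa [abs_of_pos h0])
    have k2 := hKb' t ε (by rw [abs_of_pos h0]; simpa using hε2)
    have hu : 0 < 1 + |t| := by positivity
    have aux : ∀ (K : ℝ) (w : ℂ), 0 < K → 1 + |t| ≤ K * ‖w‖ → ‖w⁻¹‖ ≤ K / (1 + |t|) := by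
      intro K w hK hw
      have hw0 : 0 < ‖w‖ := by
        by_contra hc
        have : ‖w‖ = 0 := le_antisymm (not_lt.1 hc) (norm_nonneg _)
        rw [this] at hw
        linarith
      rw [norm_inv, inv_le_comm₀ hw0 (by positivity), inv_div, div_le_iff₀ hK]
      linarith
    have j1 := aux K _ hK k1
    have j2 := aux K' _ hK' k2
    have hr : (1 + |t|) ^ (-2 : ℝ) = ((1 + |t|) ^ 2)⁻¹ := by
      rw [Real.rpow_neg hu.le]; norm_num
    rw [hr, norm_mul, norm_mul]
    calc _ ≤ ‖A‖ * (K' / (1 + |t|) * (K / (1 + |t|))) := by gcongr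
      _ = _ := by field_simp
  · filter_upwards [ae_notMem E] with t ht
    have hc : ∀ u : ℂ, u.im ≠ 0 → Tendsto (fun ε : ℝ => (t + ε * Complex.I - u : ℂ))
        (nhdsWithin 0 (Ioi 0)) (nhds (t - u)) ∧ (t : ℂ) - u ≠ 0 := by
      intro u hu
      constructor
      · have h1 : Continuous (fun ε : ℝ => (t + ε * Complex.I - u : ℂ)) := by fun_prop
        have := (h1.tendsto 0).mono_left (nhdsWithin_le_nhds (s := Ioi 0))
        simpa using this
      · intro h
        rw [← sub_eq_zero.1 h] at hu
        simp at hu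
    have t1 := hc z hz.ne'
    have t2 := hc (star z) hz'
    have lim := ((ff_bdry E T ht).div t1.1 t1.2).sub
      ((tendsto_const_nhds (x := A)).mul ((t2.1.inv₀ t2.2).mul (t1.1.inv₀ t1.2)))
    have e : ff E T t / (t - z) - ff E T z * ((z - star z) / (((t : ℂ) - star z) * (t - z))) =
      ff E T t / (t - z) - A * (((t : ℂ) - star z)⁻¹ * ((t : ℂ) - z)⁻¹) := by
      rw [hA, div_eq_mul_inv (z - star z), mul_inv]; ring
    simp only [e]
    refine lim.congr' ?_
    filter_upwards [Ioo_mem_nhdsGT hz] with ε hε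
    refine (hg _ ?_).symm
    intro h
    have := congrArg Complex.im h
    simp at this
    linarith [hε.2]

lemma half_formula (E : Finset ℝ) (T : Polynomial ℝ) (L : ℕ) (hL : 1 ≤ L) (hE : E.card = 2 * L)
    (hT : T.natDegree ≤ L - 1) (z : ℂ) (hz : 0 < z.im) :
    Integrable (fun t : ℝ => ((ff E T t).im : ℂ) / (t - z)) ∧
    ∫ t : ℝ, ((ff E T t).im : ℂ) / (t - z) = π * ff E T z := by
  have hz' : (star z).im < 0 := by simpa using hz
  have h1 := upper_val E T L hL hE hT z hz
  have h2 := lower_zero E T L hL hE hT (star z) hz'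
  have i1 := ff_quot_int E T L hL hE hT z hz.ne'
  have i2 := ff_quot_int E T L hL hE hT (star z) hz'.ne
  have i3 : Integrable (fun t : ℝ => (starRingEnd ℂ) (ff E T t / (t - star z))) :=
    (Complex.conjLIE.toContinuousLinearEquiv.toContinuousLinearMap).integrable_comp i2
  have h3 : ∫ t : ℝ, (starRingEnd ℂ) (ff E T t / (t - star z)) = 0 := by
    rw [integral_conj, h2, map_zero]
  have e : (fun t : ℝ => ((ff E T t).im : ℂ) / (t - z)) =
      fun t : ℝ => (2 * Complex.I)⁻¹ * (ff E T t / (t - z) -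
        (starRingEnd ℂ) (ff E T t / (t - star z))) := by
    funext t
    have : (starRingEnd ℂ) (ff E T t / (t - star z)) = (starRingEnd ℂ) (ff E T t) / (t - z) := by
      simp
    rw [this, ← sub_div, Complex.sub_conj]
    field_simp
    push_cast
    ring
  rw [e]
  refine ⟨(i1.sub i3).const_mul _, ?_⟩
  rw [integral_const_mul, integral_sub i1 i3, h1, h3]
  field_simp
  ring

lemma pair_mid {a b t : ℝ} (h1 : a ≤ t) (h2 : t ≤ b) :
    cs ((t : ℂ) - a) * cs ((t : ℂ) - b) = (√|(t - a) * (t - b)| : ℝ) * Complex.I := by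
  rw [← Complex.ofReal_sub, ← Complex.ofReal_sub, cs_of_nonneg (sub_nonneg.2 h1),
    cs_of_nonpos (sub_nonpos.2 h2), abs_mul, Real.sqrt_mul (abs_nonneg _),
    abs_of_nonneg (sub_nonneg.2 h1), abs_of_nonpos (sub_nonpos.2 h2)]
  push_cast; ring

lemma pair_right {a b t : ℝ} (h1 : a ≤ t) (h2 : b ≤ t) :
    cs ((t : ℂ) - a) * cs ((t : ℂ) - b) = (√|(t - a) * (t - b)| : ℝ) := by
  rw [← Complex.ofReal_sub, ← Complex.ofReal_sub, cs_of_nonneg (sub_nonneg.2 h1),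
    cs_of_nonneg (sub_nonneg.2 h2), abs_mul, Real.sqrt_mul (abs_nonneg _),
    abs_of_nonneg (sub_nonneg.2 h1), abs_of_nonneg (sub_nonneg.2 h2)]
  push_cast; ring

lemma pair_left {a b t : ℝ} (h1 : t ≤ a) (h2 : t ≤ b) :
    cs ((t : ℂ) - a) * cs ((t : ℂ) - b) = (√|(t - a) * (t - b)| : ℝ) * (-1) := by
  rw [← Complex.ofReal_sub, ← Complex.ofReal_sub, cs_of_nonpos (sub_nonpos.2 h1),
    cs_of_nonpos (sub_nonpos.2 h2), abs_mul, Real.sqrt_mul (abs_nonneg _),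
    abs_of_nonpos (sub_nonpos.2 h1), abs_of_nonpos (sub_nonpos.2 h2)]
  push_cast
  linear_combination (√(-(t - a)) * √(-(t - b)) : ℂ) * Complex.I_sq

lemma ord_lemma (L : ℕ) (aa bb : ℕ → ℝ)
    (h2 : ∀ l ∈ Finset.Icc 1 L, aa l < bb l)
    (h3 : ∀ l ∈ Finset.Icc 1 (L - 1), bb l < aa (l + 1)) :
    ∀ l m, 1 ≤ l → l < m → m ≤ L → bb l < aa m := by
  intro l m hl hlm hm
  obtain ⟨k, rfl⟩ : ∃ k, m = l + 1 + k := ⟨m - l - 1, by omega⟩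
  induction k with
  | zero => exact h3 l (Finset.mem_Icc.2 ⟨hl, by omega⟩)
  | succ k ih =>
    have h4 := ih (by omega) (by omega)
    have h5 := h2 (l + 1 + k) (Finset.mem_Icc.2 ⟨by omega, by omega⟩)
    have h6 := h3 (l + 1 + k) (Finset.mem_Icc.2 ⟨by omega, by omega⟩)
    exact (h4.trans h5).trans h6

noncomputable def EE (L : ℕ) (aa bb : ℕ → ℝ) : Finset ℝ :=
  (Finset.Icc 1 L).image aa ∪ (Finset.Icc 1 L).image bb

lemma EE_inj (L : ℕ) (aa bb : ℕ → ℝ)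
    (h2 : ∀ l ∈ Finset.Icc 1 L, aa l < bb l)
    (h3 : ∀ l ∈ Finset.Icc 1 (L - 1), bb l < aa (l + 1)) :
    Set.InjOn aa (Finset.Icc 1 L) ∧ Set.InjOn bb (Finset.Icc 1 L) ∧
    Disjoint ((Finset.Icc 1 L).image aa) ((Finset.Icc 1 L).image bb) := by
  have ho := ord_lemma L aa bb h2 h3
  refine ⟨?_, ?_, ?_⟩
  · intro l hl m hm h
    have hl' := Finset.mem_Icc.1 (Finset.mem_coe.1 hl)
    have hm' := Finset.mem_Icc.1 (Finset.mem_coe.1 hm)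
    have a1 := h2 l hl
    have a2 := h2 m hm
    rcases lt_trichotomy l m with h' | h' | h'
    · linarith [ho l m hl'.1 h' hm'.2]
    · exact h'
    · linarith [ho m l hm'.1 h' hl'.2]
  · intro l hl m hm h
    have hl' := Finset.mem_Icc.1 (Finset.mem_coe.1 hl)
    have hm' := Finset.mem_Icc.1 (Finset.mem_coe.1 hm)
    have a1 := h2 l hl
    have a2 := h2 m hm
    rcases lt_trichotomy l m with h' | h' | h'
    · linarith [ho l m hl'.1 h' hm'.2]
    · exact h'
    · linarith [ho m l hm'.1 h' hl'.2]
  · rw [Finset.disjoint_left]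
    intro x hx hx'
    obtain ⟨l, hl, rfl⟩ := Finset.mem_image.1 hx
    obtain ⟨m, hm, h⟩ := Finset.mem_image.1 hx'
    have hl' := Finset.mem_Icc.1 hl
    have hm' := Finset.mem_Icc.1 hm
    have a1 := h2 l hl
    have a2 := h2 m hm
    rcases lt_trichotomy l m with h' | h' | h'
    · linarith [ho l m hl'.1 h' hm'.2]
    · subst h'; linarith
    · linarith [ho m l hm'.1 h' hl'.2]

lemma EE_prod {M : Type*} [CommMonoid M] (L : ℕ) (aa bb : ℕ → ℝ)
    (h2 : ∀ l ∈ Finset.Icc 1 L, aa l < bb l)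
    (h3 : ∀ l ∈ Finset.Icc 1 (L - 1), bb l < aa (l + 1)) (φ : ℝ → M) :
    ∏ e ∈ EE L aa bb, φ e = ∏ l ∈ Finset.Icc 1 L, (φ (aa l) * φ (bb l)) := by
  obtain ⟨i1, i2, i3⟩ := EE_inj L aa bb h2 h3
  rw [EE, Finset.prod_union i3, Finset.prod_image i1, Finset.prod_image i2, Finset.prod_mul_distrib]

lemma EE_card (L : ℕ) (aa bb : ℕ → ℝ)
    (h2 : ∀ l ∈ Finset.Icc 1 L, aa l < bb l)
    (h3 : ∀ l ∈ Finset.Icc 1 (L - 1), bb l < aa (l + 1)) : (EE L aa bb).card = 2 * L := by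
  obtain ⟨i1, i2, i3⟩ := EE_inj L aa bb h2 h3
  rw [EE, Finset.card_union_of_disjoint i3, Finset.card_image_of_injOn i1,
    Finset.card_image_of_injOn i2, Nat.card_Icc]
  omega

lemma sign_prod (m k : ℕ) (hm : 1 ≤ m) :
    ∏ l ∈ Finset.Icc 1 (m + k), (if l < m then (1 : ℂ) else if l = m then Complex.I else -1) =
      Complex.I * (-1) ^ k := by
  induction k with
  | zero =>
    obtain ⟨j, rfl⟩ : ∃ j, m = j + 1 := ⟨m - 1, by omega⟩
    rw [add_zero, Finset.prod_Icc_succ_top (by omega), Finset.prod_eq_one]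
    · simp
    · intro l hl
      have := Finset.mem_Icc.1 hl
      rw [if_pos (by omega)]
  | succ k ih =>
    rw [← add_assoc, Finset.prod_Icc_succ_top (by omega), ih, if_neg (by omega), if_neg (by omega)]
    ring

lemma Pf_Ioo (L : ℕ) (aa bb : ℕ → ℝ)
    (h2 : ∀ l ∈ Finset.Icc 1 L, aa l < bb l)
    (h3 : ∀ l ∈ Finset.Icc 1 (L - 1), bb l < aa (l + 1))
    (m : ℕ) (hm : m ∈ Finset.Icc 1 L) (t : ℝ) (ht : t ∈ Ioo (aa m) (bb m)) :
    Pf (EE L aa bb) t = (√|∏ l ∈ Finset.Icc 1 L, ((t - aa l) * (t - bb l))| : ℝ) *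
      (Complex.I * (-1) ^ (L - m)) := by
  have ho := ord_lemma L aa bb h2 h3
  have hm' := Finset.mem_Icc.1 hm
  rw [Pf, EE_prod L aa bb h2 h3 (fun e => cs ((t : ℂ) - e)), Finset.abs_prod,
    Real.sqrt_prod _ (fun _ _ => abs_nonneg _), Complex.ofReal_prod]
  have := sign_prod m (L - m) hm'.1
  rw [show m + (L - m) = L by omega] at this
  rw [← this, ← Finset.prod_mul_distrib]
  refine Finset.prod_congr rfl fun l hl => ?_
  have hl' := Finset.mem_Icc.1 hl
  have a1 := h2 l hl
  have a2 := h2 m hm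
  rcases lt_trichotomy l m with h' | h' | h'
  · have := ho l m hl'.1 h' hm'.2
    rw [if_pos h', mul_one]
    exact pair_right (by linarith [ht.1]) (by linarith [ht.1])
  · subst h'
    rw [if_neg (lt_irrefl _), if_pos rfl]
    exact pair_mid ht.1.le ht.2.le
  · have := ho m l hm'.1 h' hl'.2
    rw [if_neg (by omega), if_neg (by omega)]
    exact pair_left (by linarith [ht.2]) (by linarith [ht.2])

lemma aeval_real (T : Polynomial ℝ) (t : ℝ) : Polynomial.aeval (t : ℂ) T = ((T.eval t : ℝ) : ℂ) := by
  have := Polynomial.aeval_algebraMap_apply ℂ t T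
  simpa using this

lemma ff_Ioo (L : ℕ) (aa bb : ℕ → ℝ)
    (h2 : ∀ l ∈ Finset.Icc 1 L, aa l < bb l)
    (h3 : ∀ l ∈ Finset.Icc 1 (L - 1), bb l < aa (l + 1)) (T : Polynomial ℝ)
    (m : ℕ) (hm : m ∈ Finset.Icc 1 L) (t : ℝ) (ht : t ∈ Ioo (aa m) (bb m)) :
    ff (EE L aa bb) T t = (((-1) ^ (L + m + 1) *
      (T.eval t / √|∏ l ∈ Finset.Icc 1 L, ((t - aa l) * (t - bb l))|) : ℝ) : ℂ) * Complex.I := by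
  rw [ff, Pf_Ioo L aa bb h2 h3 m hm t ht, aeval_real]
  have hm' := Finset.mem_Icc.1 hm
  obtain ⟨k, rfl⟩ : ∃ k, L = m + k := ⟨L - m, by omega⟩
  have e : ((-1 : ℂ)) ^ (m + k + m + 1) = -(-1) ^ k := by
    rw [show m + k + m + 1 = 2 * m + (k + 1) by ring, pow_add, pow_mul]
    simp [pow_succ]
  push_cast
  rw [e, show m + k - m = k by omega, div_eq_mul_inv, mul_inv, mul_inv, Complex.inv_I,
    ← inv_pow, show (-1 : ℂ)⁻¹ = -1 by norm_num]
  ring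

lemma ff_out (L : ℕ) (aa bb : ℕ → ℝ)
    (h2 : ∀ l ∈ Finset.Icc 1 L, aa l < bb l)
    (h3 : ∀ l ∈ Finset.Icc 1 (L - 1), bb l < aa (l + 1)) (T : Polynomial ℝ)
    (t : ℝ) (ht : ∀ m ∈ Finset.Icc 1 L, t ∉ Ioo (aa m) (bb m)) :
    (ff (EE L aa bb) T t).im = 0 := by
  have : ∀ l ∈ Finset.Icc 1 L, ∃ r : ℝ, cs ((t : ℂ) - aa l) * cs ((t : ℂ) - bb l) = r := by
    intro l hl
    have a1 := h2 l hl
    rcases le_or_gt t (aa l) with h | h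
    · refine ⟨√|(t - aa l) * (t - bb l)| * (-1), ?_⟩
      rw [pair_left h (by linarith)]
      push_cast; ring
    · have : bb l ≤ t := by
        by_contra hc
        exact ht l hl ⟨h, not_le.1 hc⟩
      exact ⟨_, pair_right h.le this⟩
  choose! r hr using this
  rw [ff, Pf, EE_prod L aa bb h2 h3 (fun e => cs ((t : ℂ) - e)), aeval_real,
    Finset.prod_congr rfl hr, ← Complex.ofReal_prod, ← Complex.ofReal_div, Complex.ofReal_im]

lemma sum_int {F : Type*} [NormedAddCommGroup F] [NormedSpace ℝ F] (L : ℕ) (aa bb : ℕ → ℝ)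
    (h2 : ∀ l ∈ Finset.Icc 1 L, aa l < bb l)
    (h3 : ∀ l ∈ Finset.Icc 1 (L - 1), bb l < aa (l + 1)) (f : ℝ → F) (hf : Integrable f)
    (h0 : ∀ t, (∀ m ∈ Finset.Icc 1 L, t ∉ Ioo (aa m) (bb m)) → f t = 0) :
    ∫ t, f t = ∑ m ∈ Finset.Icc 1 L, ∫ t in Ioo (aa m) (bb m), f t := by
  have ho := ord_lemma L aa bb h2 h3
  rw [← integral_biUnion_finset _ (fun _ _ => measurableSet_Ioo) ?_ (fun _ _ => hf.integrableOn)]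
  · refine (setIntegral_eq_integral_of_forall_compl_eq_zero fun t ht => h0 t fun m hm hmt => ?_).symm
    exact ht (mem_biUnion hm hmt)
  · intro l hl m hm hlm
    have hl' := Finset.mem_Icc.1 (Finset.mem_coe.1 hl)
    have hm' := Finset.mem_Icc.1 (Finset.mem_coe.1 hm)
    refine Set.disjoint_left.2 fun t h1 h2 => ?_
    rcases lt_trichotomy l m with h' | h' | h'
    · linarith [ho l m hl'.1 h' hm'.2, h1.2, h2.1]
    · exact hlm h'
    · linarith [ho m l hm'.1 h' hl'.2, h1.1, h2.2]

lemma sqrt_ident (E : Finset ℝ) (L : ℕ) (hE : E.card = 2 * L) (s : ℂ → ℂ)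
    (hc : ContinuousOn s {w | 0 < w.im})
    (hs : ∀ w : ℂ, 0 < w.im → s w ^ 2 = ∏ e ∈ E, (w - (e : ℂ)))
    (hlim : Tendsto (fun z : ℂ => s z / z ^ L)
      (Filter.comap (norm : ℂ → ℝ) Filter.atTop) (nhds 1)) :
    ∀ z : ℂ, 0 < z.im → s z = Pf E z := by
  have hpre : IsPreconnected {w : ℂ | 0 < w.im} :=
    (convex_halfSpace_im_gt 0).isPreconnected
  have hor := hpre.eq_or_eq_neg_of_sq_eq hc
    (fun z hz => (Pf_diff E hz).continuousAt.continuousWithinAt) (by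
      intro w hw
      simp only [Pi.pow_apply]
      rw [hs w hw, Pf, ← Finset.prod_pow]
      exact Finset.prod_congr rfl fun e _ => (cs_sq _).symm) (fun {z} hz => Pf_ne_zero' E hz)
  rcases hor with h | h
  · exact h
  exfalso
  have hpath : Tendsto (fun y : ℝ => (y * Complex.I : ℂ)) atTop
      (Filter.comap (norm : ℂ → ℝ) Filter.atTop) := by
    rw [tendsto_comap_iff]
    have : (norm ∘ fun y : ℝ => (y * Complex.I : ℂ)) = fun y => |y| := by
      funext y; simp
    rw [this]
    exact tendsto_abs_atTop_atTop
  have l1 := hlim.comp hpath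
  have l2 : Tendsto (fun y : ℝ => (∏ e ∈ E, cs (Complex.I - ((e / y : ℝ) : ℂ))) / Complex.I ^ L)
      atTop (nhds ((∏ e ∈ E, cs Complex.I) / Complex.I ^ L)) := by
    refine Tendsto.div_const (tendsto_finsetProd _ fun e _ => ?_) _
    have c1 : ContinuousAt cs (Complex.I) := (cs_diff (by simp)).continuousAt
    have c2 : Tendsto (fun y : ℝ => Complex.I - ((e / y : ℝ) : ℂ)) atTop (nhds Complex.I) := by
      have : Tendsto (fun y : ℝ => e / y) atTop (nhds 0) := tendsto_const_nhds.div_atTop tendsto_id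
      have := (Complex.continuous_ofReal.tendsto 0).comp this
      have := (tendsto_const_nhds (x := Complex.I)).sub this
      simpa using this
    exact c1.tendsto.comp c2
  have e1 : (∏ e ∈ E, cs Complex.I) / Complex.I ^ L = 1 := by
    rw [Finset.prod_const, hE, pow_mul, cs_sq]
    exact div_self (pow_ne_zero _ Complex.I_ne_zero)
  rw [e1] at l2
  have l3 : Tendsto (fun y : ℝ => (∏ e ∈ E, cs (Complex.I - ((e / y : ℝ) : ℂ))) / Complex.I ^ L)
      atTop (nhds (-1)) := by
    refine l1.neg.congr' ?_
    filter_upwards [eventually_gt_atTop 0] with y hy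
    have hy' : (y : ℂ) ≠ 0 := by exact_mod_cast hy.ne'
    simp only [Function.comp]
    rw [h (show (0:ℝ) < (y * Complex.I : ℂ).im by simpa using hy)]
    have : Pf E (y * Complex.I) = y ^ L * ∏ e ∈ E, cs (Complex.I - ((e / y : ℝ) : ℂ)) := by
      have e2 : (y : ℂ) ^ L = ∏ e ∈ E, ((√y : ℝ) : ℂ) := by
        rw [Finset.prod_const, hE, pow_mul, ← Complex.ofReal_pow (√y) 2, Real.sq_sqrt hy.le]
      rw [e2, ← Finset.prod_mul_distrib, Pf]
      refine Finset.prod_congr rfl fun e _ => ?_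
      rw [← cs_real_mul hy]
      · congr 1
        push_cast
        field_simp
      · intro h0
        have := congrArg Complex.im h0
        simp at this
    simp only [Pi.neg_apply]
    rw [this, mul_pow]
    field_simp
  have := tendsto_nhds_unique l2 l3
  norm_num at this

lemma odd_int (φ : ℝ → ℝ) (h : ∀ s, φ (-s) = -φ s) (x : ℝ) : ∫ t, φ (t - x) = 0 := by
  rw [integral_sub_right_eq_self φ x]
  have h1 := integral_neg_eq_self φ volume
  simp_rw [h] at h1
  rw [integral_neg] at h1
  linarith

lemma pv_lemma (v : ℝ → ℝ) (hv : Integrable v) (x C δ : ℝ) (hδ : 0 < δ) (hC : 0 ≤ C)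
    (hlip : ∀ t, |t - x| < δ → |v t - v x| ≤ C * |t - x|)
    (hlim : Tendsto (fun ε : ℝ => ∫ t, v t * ((t - x) / ((t - x) ^ 2 + ε ^ 2)))
      (nhdsWithin 0 (Ioi 0)) (nhds 0)) :
    (∀ ε : ℝ, 0 < ε → Integrable (fun t => v t * (if ε ≤ |t - x| then (t - x)⁻¹ else 0))) ∧
    Tendsto (fun ε : ℝ => ∫ t, v t * (if ε ≤ |t - x| then (t - x)⁻¹ else 0))
      (nhdsWithin 0 (Ioi 0)) (nhds 0) := by
  set K : ℝ → ℝ → ℝ := fun ε s => if ε ≤ |s| then s⁻¹ else 0 with hK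
  set Q : ℝ → ℝ → ℝ := fun ε s => s / (s ^ 2 + ε ^ 2) with hQ
  have mK : ∀ ε, Measurable (K ε) := fun ε =>
    Measurable.ite (measurableSet_le measurable_const (by fun_prop)) measurable_inv measurable_const
  have mQ : ∀ ε, Measurable (Q ε) := fun ε => by
    simp only [hQ]; fun_prop
  have msub : Measurable (fun t : ℝ => t - x) := by fun_prop
  have bK : ∀ ε s, 0 < ε → |K ε s| ≤ ε⁻¹ := by
    intro ε s hε
    simp only [hK]
    split_ifs with h
    · rw [abs_inv]; gcongr
    · simp; positivity
  have bQ : ∀ ε s, 0 < ε → |Q ε s| ≤ ε⁻¹ := by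
    intro ε s hε
    simp only [hQ]
    have hp : 0 < s ^ 2 + ε ^ 2 := by positivity
    rw [abs_div, abs_of_pos hp, div_le_iff₀ hp, inv_mul_eq_div, le_div_iff₀ hε, ← sq_abs s]
    nlinarith [sq_nonneg (|s| - ε), sq_nonneg (|s|), sq_nonneg ε]
  have bKQ : ∀ ε s, 0 < ε → |K ε s - Q ε s| ≤ |s|⁻¹ := by
    intro ε s hε
    rcases eq_or_ne s 0 with rfl | hs
    · simp [hK, hQ]
    have hs' : 0 < |s| := abs_pos.2 hs
    rw [← one_div, le_div_iff₀ hs', ← abs_mul]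
    have hp : 0 < s ^ 2 + ε ^ 2 := by positivity
    have q0 : 0 ≤ Q ε s * s := by
      have : Q ε s * s = s ^ 2 / (s ^ 2 + ε ^ 2) := by simp only [hQ]; ring
      rw [this]; positivity
    have q1 : Q ε s * s ≤ 1 := by
      have : Q ε s * s = s ^ 2 / (s ^ 2 + ε ^ 2) := by simp only [hQ]; ring
      rw [this, div_le_one hp]; nlinarith [sq_nonneg ε]
    have k01 : K ε s * s = 0 ∨ K ε s * s = 1 := by
      simp only [hK]
      split_ifs
      · right; field_simp
      · left; ring
    rw [sub_mul, abs_le]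
    rcases k01 with h | h <;> rw [h] <;> constructor <;> linarith
  have iK : ∀ ε, 0 < ε → Integrable (fun t => v t * K ε (t - x)) := fun ε hε =>
    hv.mul_bdd (c := ε⁻¹) ((mK ε).comp msub).aestronglyMeasurable
      (Eventually.of_forall fun t => bK ε _ hε)
  have iQ : ∀ ε, 0 < ε → Integrable (fun t => v t * Q ε (t - x)) := fun ε hε =>
    hv.mul_bdd (c := ε⁻¹) ((mQ ε).comp msub).aestronglyMeasurable
      (Eventually.of_forall fun t => bQ ε _ hε)
  refine ⟨iK, ?_⟩
  -- the localised constant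
  set J : ℝ → ℝ := fun s => if |s| < δ then 1 else 0 with hJ
  have mJ : Measurable J :=
    Measurable.ite (measurableSet_lt (by fun_prop) measurable_const) measurable_const
      measurable_const
  have iJ : Integrable (fun t => J (t - x)) := by
    have : Integrable J := by
      have e : J = indicator (Ioo (-δ) δ) (fun _ => (1:ℝ)) := by
        funext s
        simp only [hJ, indicator, mem_Ioo, abs_lt]
      rw [e, integrable_indicator_iff measurableSet_Ioo]
      exact integrableOn_const (by simp) (by simp)
    exact this.comp_sub_right x
  have iJK : ∀ ε, 0 < ε → Integrable (fun t => J (t - x) * (K ε (t - x) - Q ε (t - x))) :=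
    fun ε hε => iJ.mul_bdd (c := ε⁻¹ + ε⁻¹)
      (((mK ε).sub (mQ ε)).comp msub).aestronglyMeasurable
      (Eventually.of_forall fun t => (norm_sub_le _ _).trans (add_le_add (bK ε _ hε) (bQ ε _ hε)))
  have zJK : ∀ ε, ∫ t, J (t - x) * (K ε (t - x) - Q ε (t - x)) = 0 := by
    intro ε
    refine odd_int (fun s => J s * (K ε s - Q ε s)) (fun s => ?_) x
    simp only [hJ, hK, hQ, abs_neg]
    split_ifs <;> ring
  have dct : Tendsto (fun ε : ℝ => ∫ t, (v t - v x * J (t - x)) * (K ε (t - x) - Q ε (t - x)))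
      (nhdsWithin 0 (Ioi 0)) (nhds (∫ _t : ℝ, (0:ℝ))) := by
    refine tendsto_integral_filter_of_dominated_convergence
      (fun t => C * J (t - x) + |v t| * δ⁻¹) ?_ ?_ ((iJ.const_mul C).add (hv.abs.mul_const _)) ?_
    · refine Eventually.of_forall fun ε => ?_
      exact (hv.1.sub ((mJ.comp msub).aestronglyMeasurable.const_mul _)).mul
        (((mK ε).sub (mQ ε)).comp msub).aestronglyMeasurable
    · filter_upwards [self_mem_nhdsWithin] with ε hε
      refine Eventually.of_forall fun t => ?_
      have hb := bKQ ε (t - x) hε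
      rw [norm_mul, Real.norm_eq_abs, Real.norm_eq_abs]
      by_cases h : |t - x| < δ
      · have e : J (t - x) = 1 := by simp [hJ, h]
        rw [e, mul_one, mul_one]
        have h1 := hlip t h
        have h2 : 0 ≤ |v t| * δ⁻¹ := by positivity
        calc _ ≤ (C * |t - x|) * |t - x|⁻¹ := by gcongr
          _ ≤ C := by
            rcases eq_or_ne (|t - x|) 0 with h0 | h0
            · rw [h0]; simpa using hC
            · rw [mul_assoc, mul_inv_cancel₀ h0, mul_one]
          _ ≤ _ := by linarith
      · have e : J (t - x) = 0 := by simp [hJ, h]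
        rw [e, mul_zero, mul_zero, sub_zero, zero_add]
        have h' := not_lt.1 h
        gcongr
        refine hb.trans ?_
        gcongr
    · refine Eventually.of_forall fun t => ?_
      rcases eq_or_ne (t - x) 0 with h | h
      · have : t = x := sub_eq_zero.1 h
        subst this
        have e : J (t - t) = 1 := by simp [hJ, hδ]
        rw [e]
        simp
      · have h1 : Tendsto (fun ε : ℝ => (v t - v x * J (t - x)) *
            ((t - x)⁻¹ - (t - x) / ((t - x) ^ 2 + ε ^ 2))) (nhdsWithin 0 (Ioi 0)) (nhds 0) := by
          have hc : ContinuousAt (fun ε : ℝ => (v t - v x * J (t - x)) *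
            ((t - x)⁻¹ - (t - x) / ((t - x) ^ 2 + ε ^ 2))) 0 := by
            refine ContinuousAt.mul continuousAt_const (ContinuousAt.sub continuousAt_const
              (ContinuousAt.div continuousAt_const (by fun_prop) ?_))
            simpa using h
          have h2 := hc.tendsto.mono_left (nhdsWithin_le_nhds (s := Ioi 0))
          have e : (v t - v x * J (t - x)) *
            ((t - x)⁻¹ - (t - x) / ((t - x) ^ 2 + (0:ℝ) ^ 2)) = 0 := by
            have : (t - x)⁻¹ - (t - x) / ((t - x) ^ 2 + (0:ℝ) ^ 2) = 0 := by
              field_simp; ring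
            rw [this, mul_zero]
          rwa [e] at h2
        refine h1.congr' ?_
        filter_upwards [Ioo_mem_nhdsGT (abs_pos.2 h)] with ε hε
        simp only [hK, hQ, if_pos hε.2.le]
  rw [integral_zero] at dct
  have hsum := dct.add hlim
  rw [add_zero] at hsum
  refine hsum.congr' ?_
  filter_upwards [self_mem_nhdsWithin] with ε hε
  have hε : 0 < ε := hε
  have e1 : ∫ t, (v t - v x * J (t - x)) * (K ε (t - x) - Q ε (t - x)) =
      ∫ t, v t * (K ε (t - x) - Q ε (t - x)) := by
    have : (fun t => (v t - v x * J (t - x)) * (K ε (t - x) - Q ε (t - x))) =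
      fun t => (v t * K ε (t - x) - v t * Q ε (t - x)) -
        v x * (J (t - x) * (K ε (t - x) - Q ε (t - x))) := by
      funext t; ring
    have i1 : Integrable (fun t => v t * K ε (t - x) - v t * Q ε (t - x)) :=
      (iK ε hε).sub (iQ ε hε)
    rw [this, integral_sub i1 ((iJK ε hε).const_mul _),
      integral_const_mul, zJK, mul_zero, sub_zero]
    congr 1; funext t; ring
  rw [e1]
  have e2 : ∫ t, v t * (K ε (t - x) - Q ε (t - x)) =
      (∫ t, v t * K ε (t - x)) - ∫ t, v t * Q ε (t - x) := by
    rw [← integral_sub (iK ε hε) (iQ ε hε)]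
    congr 1; funext t; ring
  rw [e2]
  simp only [hK, hQ]
  ring

lemma Ioo_notMem_EE (L : ℕ) (aa bb : ℕ → ℝ)
    (h2 : ∀ l ∈ Finset.Icc 1 L, aa l < bb l)
    (h3 : ∀ l ∈ Finset.Icc 1 (L - 1), bb l < aa (l + 1))
    (m : ℕ) (hm : m ∈ Finset.Icc 1 L) (t : ℝ) (ht : t ∈ Ioo (aa m) (bb m)) :
    ∀ l ∈ Finset.Icc 1 L, t ≠ aa l ∧ t ≠ bb l := by
  have ho := ord_lemma L aa bb h2 h3
  have hm' := Finset.mem_Icc.1 hm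
  intro l hl
  have hl' := Finset.mem_Icc.1 hl
  have a1 := h2 l hl
  rcases lt_trichotomy l m with h' | h' | h'
  · have := ho l m hl'.1 h' hm'.2
    exact ⟨by linarith [ht.1] |> fun h : aa l < t => h.ne', by linarith [ht.1] |> fun h : bb l < t => h.ne'⟩
  · subst h'
    exact ⟨ht.1.ne', ht.2.ne⟩
  · have := ho m l hm'.1 h' hl'.2
    exact ⟨by linarith [ht.2] |> fun h : t < aa l => h.ne, by linarith [ht.2] |> fun h : t < bb l => h.ne⟩

lemma interior_mem (L : ℕ) (aa bb : ℕ → ℝ)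
    (h2 : ∀ l ∈ Finset.Icc 1 L, aa l < bb l)
    (h3 : ∀ l ∈ Finset.Icc 1 (L - 1), bb l < aa (l + 1))
    (x : ℝ) (hx : x ∈ interior (⋃ l ∈ Finset.Icc 1 L, Set.Icc (aa l) (bb l))) :
    ∃ m ∈ Finset.Icc 1 L, x ∈ Ioo (aa m) (bb m) := by
  have ho := ord_lemma L aa bb h2 h3
  have hnh := mem_interior_iff_mem_nhds.1 hx
  obtain ⟨m, hm, hxm⟩ := mem_iUnion₂.1 (interior_subset hx)
  have hm' := Finset.mem_Icc.1 hm
  have a2 := h2 m hm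
  refine ⟨m, hm, lt_of_le_of_ne hxm.1 ?_, lt_of_le_of_ne hxm.2 ?_⟩
  · intro hxa
    have ev1 : ∀ᶠ t in nhdsWithin x (Iio x),
        t ∈ ⋃ l ∈ Finset.Icc 1 L, Set.Icc (aa l) (bb l) := nhdsWithin_le_nhds hnh
    have ev2 : ∀ᶠ t in nhdsWithin x (Iio x), ∀ l ∈ Finset.Icc 1 L, l < m → bb l < t := by
      refine (Finset.eventually_all _).2 fun l hl => ?_
      by_cases hlm : l < m
      · have := ho l m (Finset.mem_Icc.1 hl).1 hlm hm'.2
        rw [hxa] at this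
        have := nhdsWithin_le_nhds (s := Iio x) (lt_mem_nhds this)
        filter_upwards [this] with t ht _ using ht
      · exact Eventually.of_forall fun t h => absurd h hlm
    obtain ⟨t, ⟨ht1, ht2⟩, ht3⟩ := ((ev1.and ev2).and self_mem_nhdsWithin).exists
    have ht3 : t < x := ht3
    obtain ⟨l, hl, htl⟩ := mem_iUnion₂.1 ht1
    have hl' := Finset.mem_Icc.1 hl
    rcases lt_trichotomy l m with h' | h' | h'
    · linarith [ht2 l hl h', htl.2]
    · subst h'; linarith [htl.1]
    · linarith [ho m l hm'.1 h' hl'.2, htl.1]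
  · intro hxa
    have ev1 : ∀ᶠ t in nhdsWithin x (Ioi x),
        t ∈ ⋃ l ∈ Finset.Icc 1 L, Set.Icc (aa l) (bb l) := nhdsWithin_le_nhds hnh
    have ev2 : ∀ᶠ t in nhdsWithin x (Ioi x), ∀ l ∈ Finset.Icc 1 L, m < l → t < aa l := by
      refine (Finset.eventually_all _).2 fun l hl => ?_
      by_cases hlm : m < l
      · have := ho m l hm'.1 hlm (Finset.mem_Icc.1 hl).2
        rw [← hxa] at this
        have := nhdsWithin_le_nhds (s := Ioi x) (gt_mem_nhds this)
        filter_upwards [this] with t ht _ using ht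
      · exact Eventually.of_forall fun t h => absurd h hlm
    obtain ⟨t, ⟨ht1, ht2⟩, ht3⟩ := ((ev1.and ev2).and self_mem_nhdsWithin).exists
    have ht3 : x < t := ht3
    obtain ⟨l, hl, htl⟩ := mem_iUnion₂.1 ht1
    have hl' := Finset.mem_Icc.1 hl
    rcases lt_trichotomy l m with h' | h' | h'
    · linarith [ho l m hl'.1 h' hm'.2, htl.2]
    · subst h'; linarith [htl.2]
    · linarith [ht2 l hl h', htl.1]

theorem stmt11 (L : ℕ) (hL : 1 ≤ L) (aa bb : ℕ → ℝ)
    (h2 : ∀ l ∈ Finset.Icc 1 L, aa l < bb l)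
    (h3 : ∀ l ∈ Finset.Icc 1 (L - 1), bb l < aa (l + 1))
    (S : Set ℝ) (hS : S = ⋃ l ∈ Finset.Icc 1 L, Set.Icc (aa l) (bb l))
    (R : ℝ → ℝ) (hR : ∀ x, R x = ∏ l ∈ Finset.Icc 1 L, ((x - aa l) * (x - bb l)))
    (sqrtR : ℂ → ℂ)
    (hsq : ∀ z : ℂ, z ∉ Complex.ofReal '' S →
      sqrtR z ^ 2 = ∏ l ∈ Finset.Icc 1 L, ((z - (aa l : ℂ)) * (z - (bb l : ℂ))))
    (hanal : AnalyticOn ℂ sqrtR (Complex.ofReal '' S)ᶜ)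
    (hlim : Tendsto (fun z : ℂ => sqrtR z / z ^ L)
      (Filter.comap (norm : ℂ → ℝ) Filter.atTop) (nhds 1))
    (T : Polynomial ℝ) (hT : T.degree ≤ (L - 1 : ℕ)) :
    -- (i)
    (∀ z : ℂ, z ∉ Complex.ofReal '' S →
      (1 / (π : ℂ)) * ∑ m ∈ Finset.Icc 1 L, (-1 : ℂ) ^ (L + m + 1) *
          ∫ t in (aa m)..(bb m), ((T.eval t / Real.sqrt |R t| : ℝ) : ℂ) / ((t : ℂ) - z) =
        Polynomial.aeval z T / sqrtR z) ∧
    -- (ii)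
    (∀ x : ℝ, x ∈ interior S →
      Tendsto (fun ε : ℝ => ∑ m ∈ Finset.Icc 1 L, (-1 : ℝ) ^ (L + m + 1) *
          ∫ t in {t : ℝ | t ∈ Set.Ioo (aa m) (bb m) ∧ ε ≤ |t - x|},
            T.eval t / ((t - x) * Real.sqrt |R t|))
        (nhdsWithin 0 (Set.Ioi 0)) (nhds 0)) := by
  have hTn : T.natDegree ≤ L - 1 := Polynomial.natDegree_le_of_degree_le hT
  have hcard := EE_card L aa bb h2 h3
  have hpi : (π : ℂ) ≠ 0 := by exact_mod_cast Real.pi_ne_zero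
  obtain ⟨v, hvdef⟩ : ∃ v : ℝ → ℝ, v = fun t : ℝ => (ff (EE L aa bb) T t).im := ⟨_, rfl⟩
  have hvIoo : ∀ m ∈ Finset.Icc 1 L, ∀ t ∈ Ioo (aa m) (bb m),
      v t = (-1) ^ (L + m + 1) * (T.eval t / √|R t|) := by
    intro m hm t ht
    rw [hvdef, hR]
    simp only
    rw [ff_Ioo L aa bb h2 h3 T m hm t ht, Complex.im_ofReal_mul, Complex.I_im, mul_one]
  have hvout : ∀ t, (∀ m ∈ Finset.Icc 1 L, t ∉ Ioo (aa m) (bb m)) → v t = 0 := by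
    intro t ht
    rw [hvdef]
    exact ff_out L aa bb h2 h3 T t ht
  have hvS : ∀ t, t ∉ S → v t = 0 := by
    intro t ht
    refine hvout t fun m hm hmt => ht ?_
    rw [hS]
    exact mem_biUnion hm (Ioo_subset_Icc_self hmt)
  have hScomp : IsCompact S := by
    rw [hS]
    exact (Finset.Icc 1 L).isCompact_biUnion fun _ _ => isCompact_Icc
  have hSC : IsClosed (Complex.ofReal '' S) :=
    (hScomp.image Complex.continuous_ofReal).isClosed
  have vmeas : Measurable v := by
    rw [hvdef]; exact Complex.measurable_im.comp (ff_meas _ T)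
  have half : ∀ z : ℂ, 0 < z.im → Integrable (fun t : ℝ => (v t : ℂ) / (t - z)) ∧
      ∫ t : ℝ, (v t : ℂ) / (t - z) = π * ff (EE L aa bb) T z := by
    intro z hz
    rw [hvdef]
    exact half_formula _ T L hL hcard hTn z hz
  have vint : Integrable v := by
    obtain ⟨M, hM⟩ := hScomp.isBounded.exists_norm_le
    refine ((half Complex.I (by simp)).1.norm.const_mul (|M| + 1)).mono'
      vmeas.aestronglyMeasurable (Eventually.of_forall fun t => ?_)
    by_cases ht : t ∈ S
    · have hne : (t : ℂ) - Complex.I ≠ 0 := fun h => by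
        have := congrArg Complex.im h
        simp at this
      have h1 : ‖(t : ℂ) - Complex.I‖ ≤ |M| + 1 := by
        refine (norm_sub_le _ _).trans ?_
        have := (hM t ht).trans (le_abs_self M)
        simpa using this
      rw [norm_div, Complex.norm_real]
      have hn : 0 < ‖(t : ℂ) - Complex.I‖ := norm_pos_iff.2 hne
      rw [← mul_div_assoc, le_div_iff₀ hn, mul_comm]
      gcongr
    · rw [hvS t ht]; simp
  have hdist : ∀ z : ℂ, z ∉ Complex.ofReal '' S → ∃ δ > 0, ∀ t ∈ S, δ ≤ ‖(t : ℂ) - z‖ := by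
    intro z hz
    obtain ⟨δ, hδ, hb⟩ := Metric.mem_nhds_iff.1 (hSC.isOpen_compl.mem_nhds hz)
    refine ⟨δ, hδ, fun t ht => ?_⟩
    by_contra hc
    have : (t : ℂ) ∈ Metric.ball z δ := by
      rw [Metric.mem_ball, dist_eq_norm]; exact not_le.1 hc
    exact hb this (mem_image_of_mem _ ht)
  have qbound : ∀ (δ : ℝ) (z : ℂ), 0 < δ → (∀ t ∈ S, δ ≤ ‖(t : ℂ) - z‖) → ∀ t : ℝ,
      ‖(v t : ℂ) / (t - z)‖ ≤ |v t| * δ⁻¹ := by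
    intro δ z hδ hz t
    by_cases ht : t ∈ S
    · rw [norm_div, Complex.norm_real, Real.norm_eq_abs, div_eq_mul_inv]
      have := hz t ht
      gcongr
    · rw [hvS t ht]; simp
  have qmeas : ∀ z : ℂ, AEStronglyMeasurable (fun t : ℝ => (v t : ℂ) / (t - z)) := by
    intro z
    exact ((Complex.measurable_ofReal.comp vmeas).div (by fun_prop)).aestronglyMeasurable
  have qint : ∀ z : ℂ, z ∉ Complex.ofReal '' S → Integrable (fun t : ℝ => (v t : ℂ) / (t - z)) := by
    intro z hz
    obtain ⟨δ, hδ, hb⟩ := hdist z hz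
    exact (vint.abs.mul_const δ⁻¹).mono' (qmeas z) (Eventually.of_forall (qbound δ z hδ hb))
  have hUS : ∀ z : ℂ, z.im ≠ 0 → z ∉ Complex.ofReal '' S := by
    rintro z hz ⟨t, _, rfl⟩
    simp at hz
  have hcont : ContinuousOn sqrtR (Complex.ofReal '' S)ᶜ := hanal.continuousOn
  have hprodE : ∀ w : ℂ, ∏ l ∈ Finset.Icc 1 L, ((w - (aa l : ℂ)) * (w - (bb l : ℂ))) =
      ∏ e ∈ EE L aa bb, (w - (e : ℂ)) := fun w =>
    (EE_prod L aa bb h2 h3 (fun e : ℝ => w - (e : ℂ))).symm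
  -- upper half plane
  have hup : ∀ z : ℂ, 0 < z.im →
      (1 / (π : ℂ)) * ∫ t : ℝ, (v t : ℂ) / (t - z) = Polynomial.aeval z T / sqrtR z := by
    intro z hz
    have hid := sqrt_ident (EE L aa bb) L hcard sqrtR
      (hcont.mono fun w hw => hUS w (ne_of_gt hw))
      (fun w hw => by rw [hsq w (hUS w hw.ne'), hprodE]) hlim z hz
    rw [(half z hz).2, hid, ff]
    field_simp
  have hlo : ∀ z : ℂ, z.im < 0 →
      (1 / (π : ℂ)) * ∫ t : ℝ, (v t : ℂ) / (t - z) = Polynomial.aeval z T / sqrtR z := by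
    intro z hz
    have hz' : 0 < ((starRingEnd ℂ) z).im := by simpa using hz
    have hid := sqrt_ident (EE L aa bb) L hcard
      (fun w => (starRingEnd ℂ) (sqrtR ((starRingEnd ℂ) w)))
      (by
        refine Complex.continuous_conj.comp_continuousOn
          (hcont.comp Complex.continuous_conj.continuousOn fun w hw => hUS _ ?_)
        have hw : 0 < w.im := hw
        simpa using hw.ne')
      (fun w hw => by
        rw [← map_pow, hsq _ (hUS _ (by simpa using hw.ne')), hprodE, map_prod]
        simp)
      (by
        have hnorm : Tendsto (starRingEnd ℂ) (Filter.comap (norm : ℂ → ℝ) Filter.atTop)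
            (Filter.comap (norm : ℂ → ℝ) Filter.atTop) := by
          rw [tendsto_comap_iff]
          refine tendsto_comap.congr fun w => ?_
          simp
        have h5 := (Complex.continuous_conj.tendsto 1).comp (hlim.comp hnorm)
        rw [map_one] at h5
        refine h5.congr fun w => ?_
        simp)
      ((starRingEnd ℂ) z) hz'
    simp only [Complex.conj_conj] at hid
    have h6 := (half _ hz').2
    rw [ff, ← hid] at h6
    have h7 := congrArg (starRingEnd ℂ) h6
    rw [← integral_conj] at h7
    have h8 : (starRingEnd ℂ) (Polynomial.aeval ((starRingEnd ℂ) z) T) = Polynomial.aeval z T := by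
      rw [Polynomial.aeval_conj, Complex.conj_conj]
    simp only [map_div₀, map_sub, Complex.conj_conj, Complex.conj_ofReal, map_mul, h8] at h7
    rw [h7]
    field_simp
  have hall : ∀ z : ℂ, z ∉ Complex.ofReal '' S →
      (1 / (π : ℂ)) * ∫ t : ℝ, (v t : ℂ) / (t - z) = Polynomial.aeval z T / sqrtR z := by
    intro z hz
    rcases lt_trichotomy z.im 0 with h | h | h
    · exact hlo z h
    swap
    · exact hup z h
    obtain ⟨δ, hδ, hb⟩ := hdist z hz
    have hpath : Tendsto (fun ε : ℝ => z + ε * Complex.I) (nhdsWithin 0 (Ioi 0)) (nhds z) := by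
      have h1 : Continuous (fun ε : ℝ => (z + ε * Complex.I : ℂ)) := by fun_prop
      have := (h1.tendsto 0).mono_left (nhdsWithin_le_nhds (s := Ioi 0))
      simpa using this
    have hne : sqrtR z ≠ 0 := by
      intro h0
      have h1 := hsq z hz
      rw [h0, zero_pow two_ne_zero] at h1
      obtain ⟨l, hl, hl0⟩ := Finset.prod_eq_zero_iff.1 h1.symm
      have a1 := h2 l hl
      apply hz
      rcases mul_eq_zero.1 hl0 with h' | h'
      · refine ⟨aa l, ?_, (sub_eq_zero.1 h').symm⟩
        rw [hS]; exact mem_biUnion hl ⟨le_rfl, a1.le⟩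
      · refine ⟨bb l, ?_, (sub_eq_zero.1 h').symm⟩
        rw [hS]; exact mem_biUnion hl ⟨a1.le, le_rfl⟩
    have r : Tendsto (fun ε : ℝ => Polynomial.aeval (z + ε * Complex.I) T /
        sqrtR (z + ε * Complex.I)) (nhdsWithin 0 (Ioi 0))
        (nhds (Polynomial.aeval z T / sqrtR z)) := by
      refine Tendsto.div ((T.continuous_aeval.tendsto z).comp hpath) ?_ hne
      exact (hcont.continuousAt (hSC.isOpen_compl.mem_nhds hz)).tendsto.comp hpath
    have l : Tendsto (fun ε : ℝ => ∫ t : ℝ, (v t : ℂ) / (t - (z + ε * Complex.I)))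
        (nhdsWithin 0 (Ioi 0)) (nhds (∫ t : ℝ, (v t : ℂ) / (t - z))) := by
      refine tendsto_integral_filter_of_dominated_convergence (fun t => |v t| * δ⁻¹)
        (Eventually.of_forall fun ε => qmeas _) (Eventually.of_forall fun ε =>
          Eventually.of_forall (qbound δ _ hδ fun t ht => (hb t ht).trans ?_))
          (vint.abs.mul_const δ⁻¹) (Eventually.of_forall fun t => ?_)
      · have e : (t : ℂ) - z = ((t - z.re : ℝ) : ℂ) := by
          apply Complex.ext <;> simp [h]
        rw [e, Complex.norm_real, Real.norm_eq_abs]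
        refine le_trans (le_of_eq ?_) (Complex.abs_re_le_norm _)
        simp
      · by_cases ht : t ∈ S
        · refine Tendsto.div tendsto_const_nhds (tendsto_const_nhds.sub hpath) ?_
          have := hb t ht
          exact norm_pos_iff.1 (by linarith)
        · rw [hvS t ht]; simp
    refine tendsto_nhds_unique (l.const_mul (1 / (π : ℂ))) (r.congr' ?_)
    filter_upwards [self_mem_nhdsWithin] with ε hε
    refine (hup _ ?_).symm
    simpa [h] using hε
  refine ⟨?_, ?_⟩
  · intro z hz
    rw [← hall z hz, sum_int L aa bb h2 h3 _ (qint z hz)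
      (fun t ht => by rw [hvout t ht]; simp)]
    congr 1
    refine Finset.sum_congr rfl fun m hm => ?_
    rw [intervalIntegral.integral_of_le (h2 m hm).le, integral_Ioc_eq_integral_Ioo,
      ← integral_const_mul]
    refine setIntegral_congr_fun measurableSet_Ioo fun t ht => ?_
    rw [hvIoo m hm t ht]
    push_cast
    ring
  · intro x hx
    obtain ⟨m, hm, hxm⟩ := interior_mem L aa bb h2 h3 x (hS ▸ hx)
    have hxE := Ioo_notMem_EE L aa bb h2 h3 m hm x hxm
    have hxE' : x ∉ EE L aa bb := by
      intro h
      rcases Finset.mem_union.1 h with h' | h'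
      · obtain ⟨l, hl, h''⟩ := Finset.mem_image.1 h'
        exact (hxE l hl).1 h''.symm
      · obtain ⟨l, hl, h''⟩ := Finset.mem_image.1 h'
        exact (hxE l hl).2 h''.symm
    have hRx : R x ≠ 0 := by
      rw [hR]
      exact Finset.prod_ne_zero_iff.2 fun l hl =>
        mul_ne_zero (sub_ne_zero.2 (hxE l hl).1) (sub_ne_zero.2 (hxE l hl).2)
    have hRd : DifferentiableAt ℝ R x := by
      have : R = fun x => ∏ l ∈ Finset.Icc 1 L, ((x - aa l) * (x - bb l)) := funext hR
      rw [this]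
      refine DifferentiableAt.fun_finsetProd fun l _ => ?_
      fun_prop
    have hvd : DifferentiableAt ℝ v x := by
      have hu : DifferentiableAt ℝ (fun t => (-1) ^ (L + m + 1) * (T.eval t / √|R t|)) x := by
        refine (DifferentiableAt.div T.differentiable.differentiableAt ?_ ?_).const_mul _
        · exact (hRd.abs hRx).sqrt (abs_ne_zero.2 hRx)
        · exact (Real.sqrt_pos.2 (abs_pos.2 hRx)).ne'
      refine hu.congr_of_eventuallyEq ?_
      filter_upwards [isOpen_Ioo.mem_nhds hxm] with t ht
      exact hvIoo m hm t ht
    obtain ⟨C, hC⟩ := hvd.isBigO_sub.bound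
    obtain ⟨δ, hδ, hCδ⟩ := Metric.eventually_nhds_iff.1 hC
    have hre : Tendsto (fun ε : ℝ => ∫ t, v t * ((t - x) / ((t - x) ^ 2 + ε ^ 2)))
        (nhdsWithin 0 (Ioi 0)) (nhds 0) := by
      have h1 := (Complex.continuous_re.tendsto _).comp
        ((ff_bdry (EE L aa bb) T hxE').const_mul (π : ℂ))
      have e0 : ((π : ℂ) * ff (EE L aa bb) T x).re = 0 := by
        rw [ff_Ioo L aa bb h2 h3 T m hm x hxm, Complex.re_ofReal_mul]
        rw [Complex.re_ofReal_mul]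
        simp
      rw [e0] at h1
      refine h1.congr' ?_
      filter_upwards [self_mem_nhdsWithin] with ε hε
      have hε : 0 < ε := hε
      have hz : 0 < (x + ε * Complex.I : ℂ).im := by simpa using hε
      simp only [Function.comp]
      rw [← (half _ hz).2]
      have := Complex.reCLM.integral_comp_comm (half _ hz).1
      simp only [Complex.reCLM_apply] at this
      rw [← this]
      congr 1
      funext t
      rw [Complex.div_re, Complex.normSq_apply]
      simp
      ring
    obtain ⟨pi1, pi2⟩ := pv_lemma v vint x |C| δ hδ (abs_nonneg C) (by
      intro t ht
      have := hCδ (y := t) (by rwa [Real.dist_eq])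
      rw [Real.norm_eq_abs, Real.norm_eq_abs] at this
      refine this.trans ?_
      gcongr
      exact le_abs_self C) hre
    refine pi2.congr' ?_
    filter_upwards [self_mem_nhdsWithin] with ε hε
    rw [sum_int L aa bb h2 h3 _ (pi1 ε hε) (fun t ht => by rw [hvout t ht]; simp)]
    refine Finset.sum_congr rfl fun l hl => ?_
    have hms : MeasurableSet {t : ℝ | ε ≤ |t - x|} :=
      measurableSet_le measurable_const (by fun_prop)
    have eset : {t : ℝ | t ∈ Set.Ioo (aa l) (bb l) ∧ ε ≤ |t - x|} =
      Ioo (aa l) (bb l) ∩ {t : ℝ | ε ≤ |t - x|} := rfl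
    rw [eset, ← setIntegral_indicator hms, ← integral_const_mul]
    refine setIntegral_congr_fun measurableSet_Ioo fun t ht => ?_
    simp only [indicator, mem_ofPred_eq]
    rw [hvIoo l hl t ht]
    split_ifs
    · rw [div_eq_mul_inv, div_eq_mul_inv, mul_inv]; ring
    · ring
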